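/- arXiv:1803.09950 — 3 statements merged into one kernel-verified Lean document; each statement's English description precedes it below -/
import Mathlib

section
/- Assume the region where V = β is nonempty, and let η be a cut-off function with constant C_η. Then there is a constant C depending only on d and C_η such that for every periodic Lipschitz function v : ℝ^d → ℝ one has ‖ηv‖ ≤ C · κ L^d · (εL) · ‖∇(ηv)‖_{L²([0,1)^d)}, where κ and L are the overlap number and the maximal valley width of the potential. (Friedrichs-type inequality for truncated functions, Lemma 2.3 of the paper.) -/
open MeasureTheory Real
open scoped BigOperators RealInnerProductSpace

noncomputable section

/-- A function on `ℝ^d` is periodic if it is `ℤ^d`-periodic. -/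
def ZPeriodic {d : ℕ} (f : (Fin d → ℝ) → ℝ) : Prop :=
  ∀ (x : Fin d → ℝ) (k : Fin d → ℤ), f (x + fun i => (k i : ℝ)) = f x

/-- The unit cell `[0,1)^d`. -/
def unitCell (d : ℕ) : Set (Fin d → ℝ) := Set.univ.pi fun _ => Set.Ico (0 : ℝ) 1

/-- Squared Euclidean norm `|∇f(x)|²` of the (a.e. defined) gradient of `f`. -/
def gradSq {d : ℕ} (f : (Fin d → ℝ) → ℝ) (x : Fin d → ℝ) : ℝ :=
  ∑ i, (fderiv ℝ f x (Pi.single i 1)) ^ 2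

/-- `‖v‖²`, the squared `L²` norm over the unit cell. -/
def l2sq {d : ℕ} (v : (Fin d → ℝ) → ℝ) : ℝ := ∫ x in unitCell d, (v x) ^ 2

/-- `‖∇v‖²_{L²([0,1)^d)}`. -/
def gradL2sq {d : ℕ} (v : (Fin d → ℝ) → ℝ) : ℝ := ∫ x in unitCell d, gradSq v x

/-- `|||v|||²`, the squared energy norm over the unit cell. -/
def energySq {d : ℕ} (V v : (Fin d → ℝ) → ℝ) : ℝ :=
  ∫ x in unitCell d, (gradSq v x + V x * (v x) ^ 2)

/-- The open grid cell of side `ε` with lower-left corner `ε q`. -/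
def gridCell {d : ℕ} (ε : ℝ) (q : Fin d → ℤ) : Set (Fin d → ℝ) :=
  {x | ∀ i, (q i : ℝ) * ε < x i ∧ x i < ((q i : ℝ) + 1) * ε}

/-- `V` is a periodic two-valued potential, constant on each (open) grid cell. -/
def IsGridPotential {d : ℕ} (ε α β : ℝ) (V : (Fin d → ℝ) → ℝ) : Prop :=
  ZPeriodic V ∧ (∀ x, V x = α ∨ V x = β) ∧
    ∀ q : Fin d → ℤ, (∀ x ∈ gridCell ε q, V x = α) ∨ (∀ x ∈ gridCell ε q, V x = β)

/-- The axis-aligned closed cube of side `ε m` which is the union of the grid cells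
`q + r`, `r ∈ {0, …, m-1}^d`. -/
def gridCube {d : ℕ} (ε : ℝ) (q : Fin d → ℤ) (m : ℕ) : Set (Fin d → ℝ) :=
  {x | ∀ i, (q i : ℝ) * ε ≤ x i ∧ x i ≤ ((q i : ℝ) + (m : ℝ)) * ε}

/-- An α-cube: a closed cube, union of grid cells, contained in `closure {V = α}`. -/
def IsAlphaCube {d : ℕ} (ε α : ℝ) (V : (Fin d → ℝ) → ℝ) (q : Fin d → ℤ) (m : ℕ) : Prop :=
  1 ≤ m ∧ gridCube ε q m ⊆ closure {x | V x = α}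

/-- A maximal α-cube: an α-cube maximal under inclusion among α-cubes. -/
def IsMaxAlphaCube {d : ℕ} (ε α : ℝ) (V : (Fin d → ℝ) → ℝ) (q : Fin d → ℤ) (m : ℕ) : Prop :=
  IsAlphaCube ε α V q m ∧ ∀ q' m', IsAlphaCube ε α V q' m' →
    gridCube ε q m ⊆ gridCube ε q' m' → gridCube ε q m = gridCube ε q' m'

/-- `ε L` is the largest side length of a maximal α-cube (with `L = 1` if no α-cube exists):
the maximal width of a potential valley. -/
def IsValleyWidth {d : ℕ} (ε α : ℝ) (V : (Fin d → ℝ) → ℝ) (L : ℕ) : Prop :=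
  IsGreatest {m | ∃ q, IsMaxAlphaCube ε α V q m} L ∨
    ((∀ q m, ¬ IsAlphaCube ε α V q m) ∧ L = 1)

/-- `κ` is the maximal number of maximal α-cubes containing a common α-grid cell. -/
def IsOverlapNumber {d : ℕ} (ε α : ℝ) (V : (Fin d → ℝ) → ℝ) (κ : ℕ) : Prop :=
  IsGreatest {n | ∃ q : Fin d → ℤ, (∀ x ∈ gridCell ε q, V x = α) ∧
    n = Nat.card {p : (Fin d → ℤ) × ℕ //
      IsMaxAlphaCube ε α V p.1 p.2 ∧ gridCell ε q ⊆ gridCube ε p.1 p.2}} κ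

/-- A cut-off function `η` with constant `Cη`: periodic, `C¹`, `[0,1]`-valued, equal to `1`
on every α-cell, vanishing on the closed concentric subcube of side `ε/2` of every β-cell,
with `‖∇η‖_∞ ≤ Cη / ε`. -/
structure IsCutoff {d : ℕ} (ε Cη α β : ℝ) (V η : (Fin d → ℝ) → ℝ) : Prop where
  periodic : ZPeriodic η
  contDiff : ContDiff ℝ 1 η
  mem_Icc : ∀ x, η x ∈ Set.Icc (0 : ℝ) 1
  eq_one : ∀ q : Fin d → ℤ, (∀ x ∈ gridCell ε q, V x = α) → ∀ x ∈ gridCell ε q, η x = 1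
  eq_zero : ∀ q : Fin d → ℤ, (∀ x ∈ gridCell ε q, V x = β) → ∀ x : Fin d → ℝ,
    (∀ i, ((q i : ℝ) + 1/4) * ε ≤ x i ∧ x i ≤ ((q i : ℝ) + 3/4) * ε) → η x = 0
  grad_le : ∀ x, ‖fderiv ℝ η x‖ ≤ Cη / ε

/-- Translation invariance of the integral of a periodic function over the unit cell. -/
lemma lintegral_unitCell_add {d : ℕ} (f : (Fin d → ℝ) → ENNReal)
    (hf : ∀ (x : Fin d → ℝ) (k : Fin d → ℤ), f (x + fun i => (k i : ℝ)) = f x)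
    (a : Fin d → ℝ) :
    ∫⁻ x in unitCell d, f (x + a) = ∫⁻ x in unitCell d, f x := by
  have hU : unitCell d = ZSpan.fundamentalDomain (Pi.basisFun ℝ (Fin d)) := by
    ext x
    simp [unitCell, ZSpan.mem_fundamentalDomain]
  have hFD := ZSpan.isAddFundamentalDomain' (Pi.basisFun ℝ (Fin d)) volume
  rw [← hU] at hFD
  have ht := hFD.vadd_of_comm a
  have hper : ∀ (g : (Submodule.span ℤ (Set.range (Pi.basisFun ℝ (Fin d)))).toAddSubgroup) (x : Fin d → ℝ),
      f (g +ᵥ x) = f x := by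
    intro g x
    have hg := (Module.Basis.mem_span_iff_repr_mem ℤ (Pi.basisFun ℝ (Fin d)) (g : Fin d → ℝ)).1 g.2
    choose k hk using hg
    have : g +ᵥ x = x + fun i => (k i : ℝ) := by
      ext i
      have := hk i
      simp at this
      change (g : Fin d → ℝ) i + x i = x i + (k i : ℝ)
      rw [this, add_comm]
    rw [this, hf]
  have hcount : Countable (Submodule.span ℤ (Set.range (Pi.basisFun ℝ (Fin d)))).toAddSubgroup :=
    inferInstanceAs (Countable (Submodule.span ℤ (Set.range (Pi.basisFun ℝ (Fin d)))))
  have h1 := ht.setLIntegral_eq hFD f hper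
  rw [← h1]
  have h2 := (measurePreserving_add_left (volume : Measure (Fin d → ℝ)) a).setLIntegral_comp_emb
    (measurableEmbedding_addLeft a) f (unitCell d)
  simp only [add_comm] at h2 ⊢
  rw [h2]
  congr 2

lemma one_dim_ftc {g : ℝ → ℝ} {K : NNReal} (hg : LipschitzWith K g) :
    ENNReal.ofReal ((g 1 - g 0) ^ 2) ≤
      ∫⁻ t in Set.Ioc (0 : ℝ) 1, ENNReal.ofReal ((deriv g t) ^ 2) := by
  have hFTC := (hg.lipschitzOnWith (s := Set.uIcc 0 1)).absolutelyContinuousOnInterval.integral_deriv_eq_sub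
  rw [intervalIntegral.integral_of_le zero_le_one] at hFTC
  have hb : ∀ t, ‖deriv g t‖ ≤ K := fun t => norm_deriv_le_of_lipschitz hg
  have hm : Measurable (deriv g) := measurable_deriv g
  have hi : Integrable (deriv g) (volume.restrict (Set.Ioc (0 : ℝ) 1)) :=
    Integrable.of_bound hm.aestronglyMeasurable K (Filter.Eventually.of_forall hb)
  have hi2 : Integrable (fun t => (deriv g t) ^ 2) (volume.restrict (Set.Ioc (0 : ℝ) 1)) := by
    refine Integrable.of_bound (hm.pow_const 2).aestronglyMeasurable ((K : ℝ) ^ 2)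
      (Filter.Eventually.of_forall fun t => ?_)
    rw [norm_pow]
    exact pow_le_pow_left₀ (norm_nonneg _) (hb t) 2
  rw [← ofReal_integral_eq_lintegral_ofReal hi2 (Filter.Eventually.of_forall fun t => sq_nonneg _)]
  apply ENNReal.ofReal_le_ofReal
  set c := g 1 - g 0 with hc
  have h0 : 0 ≤ ∫ t in Set.Ioc (0 : ℝ) 1, (deriv g t - c) ^ 2 :=
    integral_nonneg fun t => sq_nonneg _
  have h1 : ∫ t in Set.Ioc (0 : ℝ) 1, (deriv g t - c) ^ 2 =
      (∫ t in Set.Ioc (0 : ℝ) 1, (deriv g t) ^ 2) - 2 * c * c + c ^ 2 := by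
    have : ∀ t, (deriv g t - c) ^ 2 = ((deriv g t) ^ 2 - 2 * c * deriv g t) + c ^ 2 := by
      intro t; ring
    simp_rw [this]
    rw [integral_add (f := fun t => (deriv g t) ^ 2 - 2 * c * deriv g t)
      (hi2.sub (hi.const_mul _)) (integrable_const _),
      integral_sub hi2 (hi.const_mul _), integral_const_mul, hFTC]
    simp
  nlinarith

lemma volume_unitCell_lt_top (d : ℕ) : volume (unitCell d) < ⊤ := by
  unfold unitCell
  rw [Real.volume_pi_Ico]
  simp

lemma gradSq_nonneg {d : ℕ} (f : (Fin d → ℝ) → ℝ) (x) : 0 ≤ gradSq f x :=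
  Finset.sum_nonneg fun _ _ => sq_nonneg _

lemma measurable_gradSq {d : ℕ} (f : (Fin d → ℝ) → ℝ) : Measurable (gradSq f) := by
  unfold gradSq
  exact Finset.measurable_sum _ fun i _ => (measurable_fderiv_apply_const ℝ f _).pow_const 2

/-- `L²` modulus of continuity of a periodic Lipschitz function. -/
lemma translate_bound {d : ℕ} {w : (Fin d → ℝ) → ℝ} {K : NNReal} (hw : LipschitzWith K w)
    (hper : ZPeriodic w) (h : Fin d → ℝ) {ℓ : ℝ} (hh : ∀ i, h i ^ 2 ≤ ℓ ^ 2) :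
    ∫⁻ x in unitCell d, ENNReal.ofReal ((w (x + h) - w x) ^ 2) ≤
      ENNReal.ofReal (d * ℓ ^ 2) * ∫⁻ x in unitCell d, ENNReal.ofReal (gradSq w x) := by
  have hline : ∀ x, ENNReal.ofReal ((w (x + h) - w x) ^ 2) ≤
      ∫⁻ t in Set.Ioc (0 : ℝ) 1, ENNReal.ofReal ((lineDeriv ℝ w (x + t • h) h) ^ 2) := by
    intro x
    have hgl : ∃ K', LipschitzWith K' (fun t : ℝ => w (x + t • h)) := by
      refine ⟨K * ‖h‖₊, LipschitzWith.of_dist_le_mul fun s t => ?_⟩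
      refine (hw.dist_le_mul _ _).trans ?_
      rw [dist_add_left, dist_eq_norm, ← sub_smul, norm_smul, dist_eq_norm]
      simp only [NNReal.coe_mul, coe_nnnorm]
      apply le_of_eq; ring
    obtain ⟨K', hK'⟩ := hgl
    have := one_dim_ftc hK'
    simp only [one_smul, zero_smul, add_zero] at this
    refine this.trans (le_of_eq ?_)
    refine lintegral_congr fun t => ?_
    congr 2
    unfold lineDeriv
    have e : (fun s : ℝ => w (x + t • h + s • h)) = fun s => (fun u : ℝ => w (x + u • h)) (s + t) := by
      ext s; simp only; congr 1; rw [add_smul]; abel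
    rw [e, deriv_comp_add_const (f := fun u : ℝ => w (x + u • h)), zero_add]
  have hmeas : Measurable (fun x => lineDeriv ℝ w x h) := measurable_lineDeriv hw.continuous
  have hld : ∀ (x : Fin d → ℝ) (k : Fin d → ℤ),
      lineDeriv ℝ w (x + fun i => (k i : ℝ)) h = lineDeriv ℝ w x h := by
    intro x k
    unfold lineDeriv
    congr 1
    ext t
    rw [add_right_comm]
    exact hper _ _
  calc _ ≤ ∫⁻ x in unitCell d, ∫⁻ t in Set.Ioc (0 : ℝ) 1,
            ENNReal.ofReal ((lineDeriv ℝ w (x + t • h) h) ^ 2) := lintegral_mono hline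
    _ = ∫⁻ t in Set.Ioc (0 : ℝ) 1, ∫⁻ x in unitCell d,
            ENNReal.ofReal ((lineDeriv ℝ w (x + t • h) h) ^ 2) := by
        apply lintegral_lintegral_swap
        apply Measurable.aemeasurable
        have hm2 : Measurable fun p : (Fin d → ℝ) × ℝ => p.1 + p.2 • h := by fun_prop
        exact ((hmeas.comp hm2).pow_const 2).ennreal_ofReal
    _ = ∫⁻ t in Set.Ioc (0 : ℝ) 1, ∫⁻ x in unitCell d,
            ENNReal.ofReal ((lineDeriv ℝ w x h) ^ 2) := by
        refine lintegral_congr fun t => ?_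
        exact lintegral_unitCell_add (fun x => ENNReal.ofReal ((lineDeriv ℝ w x h) ^ 2))
          (fun x k => by simp only [hld]) (t • h)
    _ = ∫⁻ x in unitCell d, ENNReal.ofReal ((lineDeriv ℝ w x h) ^ 2) := by
        simp
    _ ≤ ∫⁻ x in unitCell d, ENNReal.ofReal (d * ℓ ^ 2) * ENNReal.ofReal (gradSq w x) := by
        apply lintegral_mono_ae
        apply ae_restrict_of_ae
        filter_upwards [hw.ae_differentiableAt (μ := volume)] with x hx
        rw [← ENNReal.ofReal_mul (by positivity)]
        apply ENNReal.ofReal_le_ofReal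
        rw [hx.lineDeriv_eq_fderiv]
        have e : fderiv ℝ w x h = ∑ i, h i * fderiv ℝ w x (Pi.single i 1) := by
          conv_lhs => rw [pi_eq_sum_univ' h]
          rw [map_sum]
          refine Finset.sum_congr rfl fun i _ => ?_
          rw [map_smul, smul_eq_mul]
        rw [e]
        refine (Finset.sum_mul_sq_le_sq_mul_sq _ _ _).trans ?_
        refine mul_le_mul_of_nonneg_right ?_ (gradSq_nonneg w x)
        calc _ ≤ ∑ i : Fin d, ℓ ^ 2 := Finset.sum_le_sum fun i _ => hh i
          _ = _ := by simp
    _ = _ := by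
        rw [lintegral_const_mul]
        exact (measurable_gradSq w).ennreal_ofReal

/-- The abstract Friedrichs inequality: every cube `x + [0,ℓ]^d` contains a cube of side `s` on
which `w` vanishes. -/
lemma friedrichs_lintegral {d : ℕ} {w : (Fin d → ℝ) → ℝ} {K : NNReal} (hw : LipschitzWith K w)
    (hper : ZPeriodic w) {ℓ s : ℝ} (hℓ : 0 ≤ ℓ)
    (hz : ∀ x : Fin d → ℝ, ∃ a : Fin d → ℝ, (∀ i, x i ≤ a i ∧ a i + s ≤ x i + ℓ) ∧
      ∀ y, (∀ i, a i ≤ y i ∧ y i ≤ a i + s) → w y = 0) :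
    ENNReal.ofReal s ^ d * ∫⁻ x in unitCell d, ENNReal.ofReal ((w x) ^ 2) ≤
      ENNReal.ofReal ℓ ^ d * (ENNReal.ofReal (d * ℓ ^ 2) *
        ∫⁻ x in unitCell d, ENNReal.ofReal (gradSq w x)) := by
  have hpt : ∀ x, ENNReal.ofReal s ^ d * ENNReal.ofReal ((w x) ^ 2) ≤
      ∫⁻ h in Set.Icc (0 : Fin d → ℝ) (fun _ => ℓ), ENNReal.ofReal ((w (x + h) - w x) ^ 2) := by
    intro x
    obtain ⟨a, ha, hy⟩ := hz x
    have hsub : Set.Icc (fun i => a i - x i) (fun i => a i + s - x i) ⊆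
        Set.Icc (0 : Fin d → ℝ) (fun _ => ℓ) := by
      apply Set.Icc_subset_Icc
      · intro i; simp only [Pi.zero_apply]; linarith [(ha i).1]
      · intro i; simp only; linarith [(ha i).2]
    calc _ = ∫⁻ h in Set.Icc (fun i => a i - x i) (fun i => a i + s - x i),
          ENNReal.ofReal ((w x) ^ 2) := by
          rw [setLIntegral_const, Real.volume_Icc_pi]
          have : ∀ i : Fin d, a i + s - x i - (a i - x i) = s := fun i => by ring
          simp only [this, Finset.prod_const, Finset.card_univ, Fintype.card_fin]
          rw [mul_comm]
      _ = ∫⁻ h in Set.Icc (fun i => a i - x i) (fun i => a i + s - x i),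
          ENNReal.ofReal ((w (x + h) - w x) ^ 2) := by
          refine setLIntegral_congr_fun measurableSet_Icc fun h hh => ?_
          rw [hy (x + h) fun i => ?_]
          · congr 1; ring
          · have h1 := hh.1 i
            have h2 := hh.2 i
            simp only at h1 h2
            simp only [Pi.add_apply]
            constructor <;> linarith
      _ ≤ _ := lintegral_mono_set hsub
  have hwc := hw.continuous
  calc _ = ∫⁻ x in unitCell d, ENNReal.ofReal s ^ d * ENNReal.ofReal ((w x) ^ 2) := by
        rw [lintegral_const_mul]
        exact (hwc.measurable.pow_const 2).ennreal_ofReal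
    _ ≤ ∫⁻ x in unitCell d, ∫⁻ h in Set.Icc (0 : Fin d → ℝ) (fun _ => ℓ),
          ENNReal.ofReal ((w (x + h) - w x) ^ 2) := lintegral_mono hpt
    _ = ∫⁻ h in Set.Icc (0 : Fin d → ℝ) (fun _ => ℓ), ∫⁻ x in unitCell d,
          ENNReal.ofReal ((w (x + h) - w x) ^ 2) := by
        apply lintegral_lintegral_swap
        apply Measurable.aemeasurable
        have : Continuous fun p : (Fin d → ℝ) × (Fin d → ℝ) => (w (p.1 + p.2) - w p.1) ^ 2 := by
          fun_prop
        exact this.measurable.ennreal_ofReal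
    _ ≤ ∫⁻ h in Set.Icc (0 : Fin d → ℝ) (fun _ => ℓ), (ENNReal.ofReal (d * ℓ ^ 2) *
        ∫⁻ x in unitCell d, ENNReal.ofReal (gradSq w x)) := by
        refine setLIntegral_mono measurable_const fun h hh => ?_
        refine translate_bound hw hper h fun i => ?_
        exact pow_le_pow_left₀ (hh.1 i) (hh.2 i) 2
    _ = _ := by
        rw [setLIntegral_const, Real.volume_Icc_pi]
        simp only [Pi.zero_apply, sub_zero, Finset.prod_const, Finset.card_univ, Fintype.card_fin]
        rw [mul_comm]

lemma friedrichs_real {d : ℕ} {w : (Fin d → ℝ) → ℝ} {K : NNReal} (hw : LipschitzWith K w)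
    {B : ℝ} (hB : ∀ x, |w x| ≤ B)
    (hper : ZPeriodic w) {ℓ s : ℝ} (hℓ : 0 ≤ ℓ) (hs : 0 ≤ s)
    (hz : ∀ x : Fin d → ℝ, ∃ a : Fin d → ℝ, (∀ i, x i ≤ a i ∧ a i + s ≤ x i + ℓ) ∧
      ∀ y, (∀ i, a i ≤ y i ∧ y i ≤ a i + s) → w y = 0) :
    s ^ d * l2sq w ≤ ℓ ^ d * (d * ℓ ^ 2) * gradL2sq w := by
  have hfin : IsFiniteMeasure (volume.restrict (unitCell d)) :=
    ⟨by simpa using volume_unitCell_lt_top d⟩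
  have key := friedrichs_lintegral hw hper hℓ hz
  have hi1 : Integrable (fun x => (w x) ^ 2) (volume.restrict (unitCell d)) := by
    refine Integrable.of_bound (hw.continuous.measurable.pow_const 2).aestronglyMeasurable (B ^ 2)
      (Filter.Eventually.of_forall fun x => ?_)
    rw [norm_pow, Real.norm_eq_abs]
    exact pow_le_pow_left₀ (abs_nonneg _) (hB x) 2
  have hi2 : Integrable (gradSq w) (volume.restrict (unitCell d)) := by
    refine Integrable.of_bound (measurable_gradSq w).aestronglyMeasurable
      (∑ i : Fin d, (K * ‖(Pi.single i 1 : Fin d → ℝ)‖) ^ 2)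
      (Filter.Eventually.of_forall fun x => ?_)
    rw [Real.norm_of_nonneg (gradSq_nonneg w x)]
    refine Finset.sum_le_sum fun i _ => ?_
    rw [← sq_abs, ← Real.norm_eq_abs]
    refine pow_le_pow_left₀ (norm_nonneg _) ?_ 2
    refine (ContinuousLinearMap.le_opNorm _ _).trans ?_
    exact mul_le_mul_of_nonneg_right (norm_fderiv_le_of_lipschitz ℝ hw) (norm_nonneg _)
  rw [← ofReal_integral_eq_lintegral_ofReal hi1
      (Filter.Eventually.of_forall fun x => sq_nonneg _),
    ← ofReal_integral_eq_lintegral_ofReal hi2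
      (Filter.Eventually.of_forall fun x => gradSq_nonneg w x),
    ← ENNReal.ofReal_pow hs, ← ENNReal.ofReal_pow hℓ, ← ENNReal.ofReal_mul (by positivity),
    ← ENNReal.ofReal_mul (by positivity), ← ENNReal.ofReal_mul (by positivity),
    ENNReal.ofReal_le_ofReal_iff] at key
  · unfold l2sq gradL2sq
    linarith
  · have := integral_nonneg_of_ae (μ := volume.restrict (unitCell d))
      (Filter.Eventually.of_forall (gradSq_nonneg w))
    positivity

lemma periodic_bounded {d : ℕ} {v : (Fin d → ℝ) → ℝ} (hv : Continuous v) (hper : ZPeriodic v) :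
    ∃ B : ℝ, ∀ x, |v x| ≤ B := by
  obtain ⟨B, hB⟩ := (isCompact_Icc (a := (0 : Fin d → ℝ)) (b := fun _ => 1)).exists_bound_of_continuousOn
    hv.continuousOn
  refine ⟨B, fun x => ?_⟩
  have h := hper x (fun i => -⌊x i⌋)
  rw [← h, ← Real.norm_eq_abs]
  apply hB
  constructor
  · intro i
    simp only [Pi.add_apply, Pi.zero_apply, Int.cast_neg]
    linarith [Int.floor_le (x i)]
  · intro i
    simp only [Pi.add_apply, Int.cast_neg]
    linarith [Int.lt_floor_add_one (x i)]

lemma lipschitz_mul {d : ℕ} {f g : (Fin d → ℝ) → ℝ} {K K' : NNReal} (hf : LipschitzWith K f)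
    (hg : LipschitzWith K' g) {B B' : ℝ} (hB : ∀ x, |f x| ≤ B) (hB' : ∀ x, |g x| ≤ B') :
    ∃ K'' : NNReal, LipschitzWith K'' fun x => f x * g x := by
  have hB0 : 0 ≤ B := (abs_nonneg _).trans (hB 0)
  have hB0' : 0 ≤ B' := (abs_nonneg _).trans (hB' 0)
  refine ⟨⟨B * K' + K * B', by positivity⟩, LipschitzWith.of_dist_le_mul fun x y => ?_⟩
  have h1 := hf.dist_le_mul x y
  have h2 := hg.dist_le_mul x y
  rw [Real.dist_eq] at *
  have e : f x * g x - f y * g y = f x * (g x - g y) + (f x - f y) * g y := by ring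
  rw [e]
  refine (abs_add_le _ _).trans ?_
  rw [abs_mul, abs_mul]
  have h3 := mul_le_mul (hB x) h2 (abs_nonneg _) hB0
  have h4 := mul_le_mul h1 (hB' y) (abs_nonneg _) (by positivity)
  change _ ≤ (B * K' + K * B') * dist x y
  linarith

section combinatorics

variable {d : ℕ} {ε α β : ℝ} {V : (Fin d → ℝ) → ℝ}

lemma isOpen_gridCell (ε : ℝ) (q : Fin d → ℤ) : IsOpen (gridCell ε q) := by
  have : gridCell ε q = Set.univ.pi fun i => Set.Ioo ((q i : ℝ) * ε) (((q i : ℝ) + 1) * ε) := by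
    ext x; simp [gridCell]
  rw [this]
  exact isOpen_set_pi Set.finite_univ fun i _ => isOpen_Ioo

lemma center_mem (hε : 0 < ε) (q : Fin d → ℤ) :
    (fun i => ((q i : ℝ) + 1 / 2) * ε) ∈ gridCell ε q := by
  intro i
  constructor
  · exact mul_lt_mul_of_pos_right (by linarith) hε
  · exact mul_lt_mul_of_pos_right (by linarith) hε

lemma center_mem_cube (hε : 0 < ε) {q p : Fin d → ℤ} {m : ℕ}
    (h : (fun i => ((q i : ℝ) + 1 / 2) * ε) ∈ gridCube ε p m) (i : Fin d) :
    p i ≤ q i ∧ q i + 1 ≤ p i + m := by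
  have h1 := le_of_mul_le_mul_right (h i).1 hε
  have h2 := le_of_mul_le_mul_right (h i).2 hε
  constructor
  · have : (p i : ℝ) < ((q i + 1 : ℤ) : ℝ) := by push_cast; linarith
    have := Int.cast_lt.1 this
    omega
  · have : (q i : ℝ) < ((p i + m : ℤ) : ℝ) := by push_cast; linarith
    have := Int.cast_lt.1 this
    omega

lemma cube_subset_cube (hε : 0 < ε) {q p : Fin d → ℤ} {k m : ℕ}
    (h : gridCube ε q k ⊆ gridCube ε p m) (i : Fin d) :
    p i ≤ q i ∧ q i + k ≤ p i + m := by
  have h1 : (fun i => (q i : ℝ) * ε) ∈ gridCube ε p m := h fun j =>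
    ⟨le_refl _, mul_le_mul_of_nonneg_right (by simp) hε.le⟩
  have h2 : (fun i => ((q i : ℝ) + k) * ε) ∈ gridCube ε p m := h fun j =>
    ⟨mul_le_mul_of_nonneg_right (by simp) hε.le, le_refl _⟩
  have h3 := le_of_mul_le_mul_right (h1 i).1 hε
  have h4 := le_of_mul_le_mul_right (h2 i).2 hε
  exact ⟨by exact_mod_cast h3, by exact_mod_cast h4⟩

lemma beta_shift {n : ℕ} (hn : ε * n = 1) (hper : ZPeriodic V)
    {p : Fin d → ℤ} (hp : ∀ x ∈ gridCell ε p, V x = β) (k : Fin d → ℤ) :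
    ∀ x ∈ gridCell ε (fun i => p i + n * k i), V x = β := by
  intro x hx
  have h := hper x (fun i => - k i)
  rw [← h]
  apply hp
  intro i
  have h1 := (hx i).1
  have h2 := (hx i).2
  have e : (n : ℝ) * k i * ε = k i := by
    calc (n : ℝ) * k i * ε = (ε * n) * k i := by ring
      _ = _ := by rw [hn, one_mul]
  push_cast at h1 h2
  simp only [Pi.add_apply, Int.cast_neg]
  constructor <;> nlinarith

/-- No α-cube contains a β-cell. -/
lemma alpha_no_beta (hε : 0 < ε) (hne : α ≠ β) {q p : Fin d → ℤ} {m : ℕ}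
    (hA : IsAlphaCube ε α V q m) (hp : ∀ x ∈ gridCell ε p, V x = β)
    (hin : ∀ i, q i ≤ p i ∧ p i + 1 ≤ q i + m) : False := by
  have hc : (fun i => ((p i : ℝ) + 1 / 2) * ε) ∈ gridCube ε q m := by
    intro i
    have h1 : (q i : ℝ) ≤ p i := by exact_mod_cast (hin i).1
    have h2 : (p i : ℝ) + 1 ≤ q i + m := by exact_mod_cast (hin i).2
    exact ⟨mul_le_mul_of_nonneg_right (by linarith) hε.le,
      mul_le_mul_of_nonneg_right (by linarith) hε.le⟩
  have hcl := hA.2 hc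
  obtain ⟨y, hy1, hy2⟩ := _root_.mem_closure_iff.1 hcl _ (isOpen_gridCell ε p) (center_mem hε p)
  have := hp y hy1
  exact hne (hy2.symm.trans this)

lemma alpha_size (hε : 0 < ε) (hne : α ≠ β) {n : ℕ} (hn0 : 0 < n) (hn : ε * n = 1)
    (hper : ZPeriodic V) {p : Fin d → ℤ} (hp : ∀ x ∈ gridCell ε p, V x = β)
    {q : Fin d → ℤ} {m : ℕ} (hA : IsAlphaCube ε α V q m) : m ≤ n := by
  by_contra hlt
  push Not at hlt
  have hn' : (0 : ℤ) < n := by exact_mod_cast hn0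
  refine alpha_no_beta hε hne hA (beta_shift hn hper hp fun i => -((p i - q i) / n)) fun i => ?_
  have h1 := Int.emod_nonneg (p i - q i) hn'.ne'
  have h2 := Int.emod_lt_of_pos (p i - q i) hn'
  have h3 := Int.emod_add_mul_ediv (p i - q i) n
  have h4 : (n : ℤ) < m := by exact_mod_cast hlt
  simp only [mul_neg]
  constructor <;> linarith

lemma exists_max (hε : 0 < ε) {n : ℕ}
    (hb : ∀ q m, IsAlphaCube ε α V q m → m ≤ n)
    {q : Fin d → ℤ} {m : ℕ} (hA : IsAlphaCube ε α V q m) :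
    ∃ q' m', IsMaxAlphaCube ε α V q' m' ∧ gridCube ε q m ⊆ gridCube ε q' m' ∧ m ≤ m' := by
  classical
  let P : ℕ → Prop := fun k => m ≤ k ∧ ∃ q', IsAlphaCube ε α V q' k ∧
    gridCube ε q m ⊆ gridCube ε q' k
  have hPm : P m := ⟨le_refl _, q, hA, subset_rfl⟩
  have hfg := Nat.findGreatest_spec (P := P) (hb q m hA) hPm
  have hmax : ∀ k, P k → k ≤ Nat.findGreatest P n := fun k hk =>
    Nat.le_findGreatest (by obtain ⟨_, q', h1, _⟩ := hk; exact hb _ _ h1) hk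
  generalize Nat.findGreatest P n = M at hfg hmax
  obtain ⟨hle, q', hA', hsub⟩ := hfg
  refine ⟨q', M, ⟨hA', fun q'' m'' hA'' hs => ?_⟩, hsub, hle⟩
  by_cases hM : M ≤ m''
  · have h1 := hmax m'' ⟨hle.trans hM, q'', hA'', hsub.trans hs⟩
    have h2 : m'' = M := le_antisymm h1 hM
    subst h2
    have : q' = q'' := by
      ext i
      have := cube_subset_cube hε hs i
      omega
    rw [this]
  · -- then there are no coordinates
    have : gridCube ε q'' m'' ⊆ gridCube ε q' M := by
      intro x hx i
      have := cube_subset_cube hε hs i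
      omega
    exact hs.antisymm this

lemma alpha_cube_of_cells (hε : 0 < ε) {q : Fin d → ℤ} {m : ℕ} (hm : 1 ≤ m)
    (h : ∀ p : Fin d → ℤ, (∀ i, q i ≤ p i ∧ p i + 1 ≤ q i + m) →
      ∀ x ∈ gridCell ε p, V x = α) : IsAlphaCube ε α V q m := by
  refine ⟨hm, fun x hx => ?_⟩
  let p : Fin d → ℤ := fun i => min ⌊x i / ε⌋ (q i + m - 1)
  have hp : ∀ i, q i ≤ p i ∧ p i + 1 ≤ q i + m := by
    intro i
    have h1 : q i ≤ ⌊x i / ε⌋ := Int.le_floor.2 ((le_div_iff₀ hε).2 (hx i).1)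
    simp only [p]
    omega
  have hpx : ∀ i, (p i : ℝ) * ε ≤ x i ∧ x i ≤ ((p i : ℝ) + 1) * ε := by
    intro i
    constructor
    · have : (p i : ℝ) ≤ ⌊x i / ε⌋ := by exact_mod_cast min_le_left _ _
      exact (le_div_iff₀ hε).1 (this.trans (Int.floor_le _))
    · rcases min_choice ⌊x i / ε⌋ (q i + m - 1) with h1 | h1
      · simp only [p, h1]
        exact ((div_lt_iff₀ hε).1 (Int.lt_floor_add_one (x i / ε))).le
      · simp only [p, h1]
        push_cast
        have := (hx i).2
        linarith
  have hcl : x ∈ closure (gridCell ε p) := by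
    have e : gridCell ε p = Set.univ.pi fun i => Set.Ioo ((p i : ℝ) * ε) (((p i : ℝ) + 1) * ε) := by
      ext x; simp [gridCell]
    rw [e, closure_pi_set]
    intro i _
    have hlt : (p i : ℝ) * ε ≠ ((p i : ℝ) + 1) * ε := by
      intro h0
      linarith
    change x i ∈ closure (Set.Ioo ((p i : ℝ) * ε) (((p i : ℝ) + 1) * ε))
    rw [closure_Ioo hlt]
    exact hpx i
  exact closure_mono (fun y hy => h p hp y hy) hcl

end combinatorics

/-- Lemma 2.3 of the paper: Friedrichs-type inequality for truncated
functions. If the β-region is nonempty and `η` is a cut-off function with constant `Cη`,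
then there is a constant `C = C(d, Cη)` such that every periodic Lipschitz `v : ℝ^d → ℝ`
satisfies `‖ηv‖ ≤ C · κ L^d · (εL) · ‖∇(ηv)‖_{L²([0,1)^d)}`. -/
theorem statement0 (d : ℕ) (hd : 1 ≤ d) (Cη : ℝ) :
    ∃ C : ℝ, 0 < C ∧
      ∀ (ε α β : ℝ) (V η : (Fin d → ℝ) → ℝ) (L κ : ℕ),
        0 < ε → (∃ n : ℕ, 0 < n ∧ ε * n = 1) →
        0 ≤ α → α ≤ β →
        IsGridPotential ε α β V →
        (∃ q : Fin d → ℤ, ∀ x ∈ gridCell ε q, V x = β) →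
        IsCutoff ε Cη α β V η →
        IsValleyWidth ε α V L → IsOverlapNumber ε α V κ →
        ∀ v : (Fin d → ℝ) → ℝ, ZPeriodic v → (∃ K : NNReal, LipschitzWith K v) →
          Real.sqrt (l2sq fun x => η x * v x) ≤
            C * ((κ : ℝ) * (L : ℝ) ^ d) * (ε * (L : ℝ)) *
              Real.sqrt (gradL2sq fun x => η x * v x) := by
  refine ⟨√(6 ^ d * 9 * d), Real.sqrt_pos.2 ?_, ?_⟩
  · have : (0 : ℝ) < d := by exact_mod_cast hd
    positivity
  intro ε α β V η L κ hε ⟨n, hn0, hn⟩ _ _ hV ⟨pβ, hpβ⟩ hη hL hκ v hvper ⟨Kv, hv⟩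
  obtain ⟨hVper, hV2, hVc⟩ := hV
  -- `α ≠ β`
  have hne : α ≠ β := by
    rintro rfl
    have h1 := hη.eq_one pβ hpβ _ (center_mem hε pβ)
    have h2 := hη.eq_zero pβ hpβ (fun i => ((pβ i : ℝ) + 1 / 2) * ε) fun i =>
      ⟨mul_le_mul_of_nonneg_right (by linarith) hε.le,
        mul_le_mul_of_nonneg_right (by linarith) hε.le⟩
    linarith
  have hb : ∀ q m, IsAlphaCube ε α V q m → m ≤ n := fun q m hA =>
    alpha_size hε hne hn0 hn hVper hpβ hA
  -- `κ ≥ 1`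
  have hκ1 : 1 ≤ κ := by
    obtain ⟨⟨q, hq, hcard⟩, _⟩ := hκ
    rw [hcard]
    have hA : IsAlphaCube ε α V q 1 := by
      refine alpha_cube_of_cells hε le_rfl fun p hp => ?_
      have : p = q := by
        ext i
        have := hp i
        push_cast at this
        omega
      rw [this]; exact hq
    obtain ⟨q', m', hmax, hsub, _⟩ := exists_max hε hb hA
    have hcell : gridCell ε q ⊆ gridCube ε q 1 := by
      intro x hx i
      have := hx i
      push_cast
      exact ⟨this.1.le, this.2.le⟩
    have hfin : Set.Finite {p : (Fin d → ℤ) × ℕ |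
        IsMaxAlphaCube ε α V p.1 p.2 ∧ gridCell ε q ⊆ gridCube ε p.1 p.2} := by
      refine ((Set.finite_Icc (fun i => q i - n) q).prod (Set.finite_Iic n)).subset ?_
      rintro ⟨p, m⟩ ⟨h1, h2⟩
      have hm := hb _ _ h1.1
      have hc := center_mem_cube hε (h2 (center_mem hε q))
      simp only at hm hc
      refine ⟨⟨fun i => ?_, fun i => ?_⟩, hm⟩
      · have := hc i
        simp only
        omega
      · exact (hc i).1
    have : Finite {p : (Fin d → ℤ) × ℕ //
        IsMaxAlphaCube ε α V p.1 p.2 ∧ gridCell ε q ⊆ gridCube ε p.1 p.2} := hfin.to_subtype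
    have : Nonempty {p : (Fin d → ℤ) × ℕ //
        IsMaxAlphaCube ε α V p.1 p.2 ∧ gridCell ε q ⊆ gridCube ε p.1 p.2} :=
      ⟨⟨(q', m'), hmax, hcell.trans hsub⟩⟩
    exact Nat.card_pos
  -- every cube of `L + 1` cells contains a β-cell
  have hbeta : ∀ q : Fin d → ℤ, ∃ p : Fin d → ℤ, (∀ i, q i ≤ p i ∧ p i + 1 ≤ q i + (L + 1 : ℕ)) ∧
      ∀ x ∈ gridCell ε p, V x = β := by
    intro q
    by_contra hcon
    push Not at hcon
    have hA : IsAlphaCube ε α V q (L + 1) := by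
      refine alpha_cube_of_cells hε (by omega) fun p hp => ?_
      rcases hVc p with h | h
      · exact h
      · obtain ⟨x, hx, hxx⟩ := hcon p hp
        exact absurd (h x hx) hxx
    rcases hL with h | h
    · obtain ⟨q', m', hmax, _, hle⟩ := exists_max hε hb hA
      have := h.2 ⟨q', hmax⟩
      omega
    · exact h.1 _ _ hA
  have hL1 : 1 ≤ L := by
    rcases hL with h | h
    · obtain ⟨q, hq⟩ := h.1
      exact hq.1.1
    · exact h.2.ge
  -- the truncated function
  have hηl : LipschitzWith (Cη / ε).toNNReal η := by
    refine lipschitzWith_of_nnnorm_fderiv_le (𝕜 := ℝ) (hη.contDiff.differentiable (by simp)) fun x => ?_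
    rw [← NNReal.coe_le_coe, coe_nnnorm]
    exact (hη.grad_le x).trans (Real.le_coe_toNNReal _)
  have hηb : ∀ x, |η x| ≤ 1 := fun x => by
    rw [abs_of_nonneg (hη.mem_Icc x).1]; exact (hη.mem_Icc x).2
  obtain ⟨Bv, hBv⟩ := periodic_bounded hv.continuous hvper
  obtain ⟨Kw, hw⟩ := lipschitz_mul hηl hv hηb hBv
  have hwper : ZPeriodic fun x => η x * v x := fun x k => by
    simp only [hη.periodic x k, hvper x k]
  obtain ⟨Bw, hBw⟩ := periodic_bounded hw.continuous hwper
  have key := friedrichs_real hw hBw hwper (ℓ := (L + 2) * ε) (s := ε / 2) (by positivity)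
    (by positivity) (by
      intro x
      obtain ⟨p, hp, hpβ'⟩ := hbeta fun i => ⌈x i / ε⌉
      refine ⟨fun i => ((p i : ℝ) + 1 / 4) * ε, fun i => ?_, fun y hy => ?_⟩
      · have h1 : (⌈x i / ε⌉ : ℝ) ≤ p i := by exact_mod_cast (hp i).1
        have h2 : (p i : ℝ) + 1 ≤ ⌈x i / ε⌉ + (L + 1) := by exact_mod_cast (hp i).2
        have h3 : x i ≤ ⌈x i / ε⌉ * ε := (div_le_iff₀ hε).1 (Int.le_ceil _)
        have h4 : (⌈x i / ε⌉ : ℝ) * ε < x i + ε := by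
          have := mul_lt_mul_of_pos_right (Int.ceil_lt_add_one (x i / ε)) hε
          rwa [add_mul, div_mul_cancel₀ _ hε.ne', one_mul] at this
        have h5 := mul_le_mul_of_nonneg_right h1 hε.le
        have h6 := mul_le_mul_of_nonneg_right h2 hε.le
        constructor <;> nlinarith
      · have : η y = 0 := hη.eq_zero p hpβ' y fun i => by
          have := hy i
          constructor <;> linarith
        simp only [this, zero_mul])
  set A := l2sq fun x => η x * v x
  set G := gradL2sq fun x => η x * v x with hG
  have hG0 : 0 ≤ G := by
    rw [hG]
    exact integral_nonneg_of_ae (Filter.Eventually.of_forall (gradSq_nonneg _))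
  have hLr : (1 : ℝ) ≤ L := by exact_mod_cast hL1
  have hκr : (1 : ℝ) ≤ κ := by exact_mod_cast hκ1
  have hℓ : ((L : ℝ) + 2) * ε ≤ 3 * L * ε := mul_le_mul_of_nonneg_right (by linarith) hε.le
  have hℓ0 : 0 ≤ ((L : ℝ) + 2) * ε := by positivity
  have hLd : (1 : ℝ) ≤ (L : ℝ) ^ d := one_le_pow₀ hLr
  have hA : A ≤ 6 ^ d * 9 * d * (L : ℝ) ^ d * (ε * L) ^ 2 * G := by
    have hs : (0 : ℝ) < (ε / 2) ^ d := by positivity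
    refine le_of_mul_le_mul_left ?_ hs
    calc (ε / 2) ^ d * A ≤ ((L + 2) * ε) ^ d * (d * ((L + 2) * ε) ^ 2) * G := key
      _ ≤ (3 * L * ε) ^ d * (d * (3 * L * ε) ^ 2) * G := by gcongr
      _ = _ := by
        have : (3 * (L : ℝ) * ε) ^ d = (ε / 2) ^ d * 6 ^ d * L ^ d := by
          rw [← mul_pow, ← mul_pow]; congr 1; ring
        rw [this]; ring
  have hκL : (L : ℝ) ^ d ≤ ((κ : ℝ) * (L : ℝ) ^ d) ^ 2 := by
    have h1 : (L : ℝ) ^ d ≤ (κ : ℝ) * (L : ℝ) ^ d := le_mul_of_one_le_left (by positivity) hκr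
    have h2 : (1 : ℝ) ≤ (κ : ℝ) * (L : ℝ) ^ d := hLd.trans h1
    nlinarith
  have hfinal : A ≤ (√(6 ^ d * 9 * d) * ((κ : ℝ) * (L : ℝ) ^ d) * (ε * (L : ℝ))) ^ 2 * G := by
    rw [mul_pow, mul_pow, Real.sq_sqrt (by positivity)]
    refine hA.trans ?_
    gcongr
  calc √A ≤ √((√(6 ^ d * 9 * d) * ((κ : ℝ) * (L : ℝ) ^ d) * (ε * (L : ℝ))) ^ 2 * G) :=
        Real.sqrt_le_sqrt hfinal
    _ = _ := by
        rw [Real.sqrt_mul (by positivity), Real.sqrt_sq (by positivity)]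

end
end

section
/- Assume the region where V = β is nonempty, that a cut-off function η with constant C_η exists, and that β ≥ c_β ε^{-2} for some c_β > 0. Then there is a constant C depending only on d, C_η and c_β such that every periodic Lipschitz function v : ℝ^d → ℝ satisfies ‖v‖² ≤ C (κ L^d)² (εL)² |||v|||². Consequently, the Rayleigh quotient E(v) := |||v|||²/‖v‖² satisfies E(v) ≥ C^{-1} (κ L^d)^{-2} (εL)^{-2} for every nonzero periodic Lipschitz v, i.e., the ground-state energy is bounded below by a constant times (κ² L^{2d} (εL)²)^{-1}. (Estimate (2.2) and Lemma 2.4 of the paper.) -/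
open MeasureTheory Real
open scoped BigOperators RealInnerProductSpace

noncomputable section

lemma aux_translate {d : ℕ} {f : (Fin d → ℝ) → ℝ} (hf : ZPeriodic f) (a : Fin d → ℝ) :
    ∫ x in unitCell d, f (x + a) = ∫ x in unitCell d, f x := by
  have h0 := ZSpan.isAddFundamentalDomain' (Pi.basisFun ℝ (Fin d)) volume
  rw [ZSpan.fundamentalDomain_pi_basisFun] at h0
  change IsAddFundamentalDomain _ (unitCell d) volume at h0
  have h1 := h0.vadd_of_comm a
  have hinv : ∀ (g : (Submodule.span ℤ (Set.range (Pi.basisFun ℝ (Fin d)))).toAddSubgroup) (x : Fin d → ℝ),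
      f (g +ᵥ x) = f x := by
    rintro ⟨g, hg⟩ x
    rw [Submodule.mem_toAddSubgroup, Module.Basis.mem_span_iff_repr_mem] at hg
    choose k hk using hg
    have : g = fun i => (k i : ℝ) := by
      funext i
      have := hk i
      simpa using this.symm
    change f (g + x) = f x
    rw [add_comm, this]
    exact hf x k
  have hcount : Countable (Submodule.span ℤ (Set.range (Pi.basisFun ℝ (Fin d)))) := inferInstance
  have : Countable (Submodule.span ℤ (Set.range (Pi.basisFun ℝ (Fin d)))).toAddSubgroup := hcount
  rw [h0.setIntegral_eq h1 hinv]
  have h2 := (measurePreserving_add_left (volume : Measure (Fin d → ℝ)) a).setIntegral_image_emb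
    (measurableEmbedding_addLeft a) f (unitCell d)
  refine Eq.trans ?_ h2.symm
  simp only [add_comm]

lemma aux_meas (d : ℕ) : MeasurableSet (unitCell d) :=
  MeasurableSet.univ_pi fun _ => measurableSet_Ico

lemma aux_sub (d : ℕ) : unitCell d ⊆ Set.Icc (0 : Fin d → ℝ) 1 := by
  intro x hx
  exact ⟨fun i => (hx i trivial).1, fun i => (hx i trivial).2.le⟩

lemma aux_int {d : ℕ} {f : (Fin d → ℝ) → ℝ} (hf : Continuous f) :
    IntegrableOn f (unitCell d) :=
  (hf.continuousOn.integrableOn_compact isCompact_Icc).mono_set (aux_sub d)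

lemma aux_int_mul {d : ℕ} {g f : (Fin d → ℝ) → ℝ} (hg : AEStronglyMeasurable g volume) {B : ℝ}
    (hB : ∀ x, |g x| ≤ B) (hf : Continuous f) :
    IntegrableOn (fun x => g x * f x) (unitCell d) :=
  (aux_int hf).bdd_mul hg.restrict (Filter.Eventually.of_forall hB)

lemma aux_fin (d : ℕ) : IsFiniteMeasure (volume.restrict (unitCell d)) := by
  have := (aux_int (d := d) (f := fun _ => (1 : ℝ)) continuous_const)
  exact ⟨by
    rw [Measure.restrict_apply_univ]
    exact (measure_mono (aux_sub d)).trans_lt isCompact_Icc.measure_lt_top⟩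

lemma aux_fderiv_bound {d : ℕ} {v : (Fin d → ℝ) → ℝ} {K : NNReal} (hK : LipschitzWith K v)
    (h x : Fin d → ℝ) : |fderiv ℝ v x h| ≤ K * ‖h‖ :=
  ((fderiv ℝ v x).le_opNorm h).trans (by gcongr; exact norm_fderiv_le_of_lipschitz ℝ hK)

lemma aux_int_fderiv {d : ℕ} {v : (Fin d → ℝ) → ℝ} {K : NNReal} (hK : LipschitzWith K v)
    (h : Fin d → ℝ) : IntegrableOn (fun x => (fderiv ℝ v x h) ^ 2) (unitCell d) := by
  have := aux_fin d
  refine Integrable.of_bound (C := (K * ‖h‖) ^ 2)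
    ((measurable_fderiv_apply_const ℝ v h).pow_const 2).aestronglyMeasurable ?_
  refine Filter.Eventually.of_forall fun x => ?_
  rw [Real.norm_eq_abs, abs_pow]
  gcongr
  exact aux_fderiv_bound hK h x

lemma aux_int_gradSq {d : ℕ} {v : (Fin d → ℝ) → ℝ} {K : NNReal} (hK : LipschitzWith K v) :
    IntegrableOn (gradSq v) (unitCell d) := by
  unfold gradSq
  exact integrable_finsetSum _ fun i _ => aux_int_fderiv hK _

lemma aux_fderiv_sq {d : ℕ} (v : (Fin d → ℝ) → ℝ) (h x : Fin d → ℝ) :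
    (fderiv ℝ v x h) ^ 2 ≤ (∑ i, h i ^ 2) * gradSq v x := by
  have : fderiv ℝ v x h = ∑ i, h i * fderiv ℝ v x (Pi.single i 1) := by
    conv_lhs => rw [← (Pi.basisFun ℝ (Fin d)).sum_repr h]
    simp [map_sum]
  rw [this]
  exact Finset.sum_mul_sq_le_sq_mul_sq _ _ _

/-- the difference quotient estimate -/
lemma aux_diff {d : ℕ} {v : (Fin d → ℝ) → ℝ} (hv : ZPeriodic v) {K : NNReal}
    (hK : LipschitzWith K v) (h : Fin d → ℝ) :
    ∫ x in unitCell d, (v (x + h) - v x) ^ 2 ≤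
      (∑ i, h i ^ 2) * ∫ x in unitCell d, gradSq v x := by
  have := aux_fin d
  have hc := hK.continuous
  have step : ∀ N : ℕ, ∫ x in unitCell d, (v (x + h) - v x) ^ 2 ≤
      ∫ x in unitCell d, (((N + 1 : ℕ) : ℝ) • (v (x + ((N + 1 : ℕ) : ℝ)⁻¹ • h) - v x)) ^ 2 := by
    intro N
    set M : ℕ := N + 1 with hM
    have hM0 : (M : ℝ) ≠ 0 := by positivity
    set k : Fin d → ℝ := (M : ℝ)⁻¹ • h with hk
    have hMk : (M : ℝ) • k = h := by rw [hk, smul_inv_smul₀ hM0]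
    have hper : ZPeriodic (fun x => (v (x + k) - v x) ^ 2) := by
      intro x z
      have := hv (x + k) z
      simp only [hv x z]
      rw [add_right_comm, this]
    have hpt : ∀ x, (v (x + h) - v x) ^ 2 ≤
        M * ∑ j ∈ Finset.range M, (v (x + (j : ℝ) • k + k) - v (x + (j : ℝ) • k)) ^ 2 := by
      intro x
      have h1 : v (x + h) - v x =
          ∑ j ∈ Finset.range M, (v (x + (j : ℝ) • k + k) - v (x + (j : ℝ) • k)) := by
        have := Finset.sum_range_sub (fun j : ℕ => v (x + (j : ℝ) • k)) M
        simp only [hMk, Nat.cast_zero, zero_smul, add_zero] at this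
        rw [← this]
        refine Finset.sum_congr rfl fun j _ => ?_
        rw [Nat.cast_succ, add_smul, one_smul, add_assoc]
      rw [h1]
      simpa using sq_sum_le_card_mul_sum_sq (s := Finset.range M)
        (f := fun j => v (x + (j : ℝ) • k + k) - v (x + (j : ℝ) • k))
    calc ∫ x in unitCell d, (v (x + h) - v x) ^ 2
        ≤ ∫ x in unitCell d,
          M * ∑ j ∈ Finset.range M, (v (x + (j : ℝ) • k + k) - v (x + (j : ℝ) • k)) ^ 2 := by
          refine integral_mono (aux_int (by fun_prop)) (aux_int ?_) hpt
          fun_prop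
      _ = M * ∑ j ∈ Finset.range M, ∫ x in unitCell d,
            (v (x + (j : ℝ) • k + k) - v (x + (j : ℝ) • k)) ^ 2 := by
          rw [integral_const_mul, integral_finsetSum]
          intro j _
          exact aux_int (by fun_prop)
      _ = M * ∑ j ∈ Finset.range M, ∫ x in unitCell d, (v (x + k) - v x) ^ 2 := by
          congr 1
          refine Finset.sum_congr rfl fun j _ => ?_
          exact aux_translate hper ((j : ℝ) • k)
      _ = ∫ x in unitCell d, ((M : ℝ) • (v (x + k) - v x)) ^ 2 := by
          rw [Finset.sum_const, Finset.card_range, nsmul_eq_mul, ← mul_assoc,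
            ← integral_const_mul]
          congr 1
          funext x
          simp only [smul_eq_mul]
          ring
  have hlim : Filter.Tendsto (fun N : ℕ => ∫ x in unitCell d,
      (((N + 1 : ℕ) : ℝ) • (v (x + ((N + 1 : ℕ) : ℝ)⁻¹ • h) - v x)) ^ 2) Filter.atTop
      (nhds (∫ x in unitCell d, (fderiv ℝ v x h) ^ 2)) := by
    refine tendsto_integral_of_dominated_convergence (fun _ => (K * ‖h‖) ^ 2) ?_ ?_ ?_ ?_
    · intro N
      refine Continuous.aestronglyMeasurable ?_
      fun_prop
    · exact integrable_const _
    · intro N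
      refine Filter.Eventually.of_forall fun x => ?_
      rw [Real.norm_eq_abs, abs_pow]
      gcongr
      have := hK.dist_le_mul (x + ((N + 1 : ℕ) : ℝ)⁻¹ • h) x
      rw [Real.dist_eq, dist_self_add_left, norm_smul] at this
      rw [smul_eq_mul, abs_mul]
      have hp : (0 : ℝ) < ((N + 1 : ℕ) : ℝ) := by positivity
      rw [norm_inv, Real.norm_of_nonneg hp.le] at this
      rw [abs_of_pos hp]
      calc _ ≤ ((N + 1 : ℕ) : ℝ) * (K * (((N + 1 : ℕ) : ℝ)⁻¹ * ‖h‖)) := by gcongr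
        _ = K * ‖h‖ := by field_simp
    · have := hK.ae_differentiableAt (μ := (volume : Measure (Fin d → ℝ)))
      filter_upwards [ae_restrict_of_ae this] with x hx
      refine Filter.Tendsto.pow ?_ 2
      refine hx.hasFDerivAt.lim h (c := fun N : ℕ => ((N + 1 : ℕ) : ℝ)) ?_
      refine tendsto_norm_atTop_atTop.comp ?_
      exact tendsto_natCast_atTop_atTop.comp (Filter.tendsto_add_atTop_nat 1)
  have h1 := ge_of_tendsto' hlim step
  refine h1.trans ?_
  rw [← integral_const_mul]
  exact integral_mono (aux_int_fderiv hK h) ((aux_int_gradSq hK).const_mul _)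
    fun x => aux_fderiv_sq v h x

lemma aux_pos {d : ℕ} {v : (Fin d → ℝ) → ℝ} (hv : ZPeriodic v) (hc : Continuous v)
    (h0 : v ≠ 0) : 0 < l2sq v := by
  obtain ⟨x0, hx0⟩ := Function.ne_iff.1 h0
  have hper : ZPeriodic (fun x => v x ^ 2) := by
    intro x z
    simp only [hv x z]
  unfold l2sq
  rw [← aux_translate hper (x0 - fun _ => 1 / 2)]
  rw [setIntegral_pos_iff_support_of_nonneg_ae
    (Filter.Eventually.of_forall fun x => sq_nonneg _) (aux_int (by fun_prop))]
  have hsub : (Function.support (fun x => v (x + (x0 - fun _ => 1 / 2)) ^ 2) ∩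
      Set.univ.pi fun _ => Set.Ioo (0 : ℝ) 1) ⊆
      (Function.support (fun x => v (x + (x0 - fun _ => 1 / 2)) ^ 2) ∩ unitCell d) := by
    refine Set.inter_subset_inter_right _ ?_
    exact Set.pi_mono fun i _ => Set.Ioo_subset_Ico_self
  refine lt_of_lt_of_le ?_ (measure_mono hsub)
  refine IsOpen.measure_pos _ ?_ ?_
  · refine IsOpen.inter ?_ (isOpen_set_pi Set.finite_univ fun i _ => isOpen_Ioo)
    have : Continuous (fun x => v (x + (x0 - fun _ => 1 / 2)) ^ 2) := by fun_prop
    exact this.isOpen_support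
  · refine ⟨fun _ => 1 / 2, ?_, ?_⟩
    · simpa using hx0
    · intro i _
      constructor <;> norm_num

/-- almost every point is in an open grid cell -/
lemma aux_ae {d : ℕ} {ε : ℝ} (hε : 0 < ε) :
    ∀ᵐ x : Fin d → ℝ, ∃ q : Fin d → ℤ, x ∈ gridCell ε q := by
  have h : ∀ i : Fin d, ∀ k : ℤ, ∀ᵐ x : Fin d → ℝ, x i ≠ k * ε := by
    intro i k
    have := Measure.pi_hyperplane (fun _ : Fin d => (volume : Measure ℝ)) i ((k : ℝ) * ε)
    rw [ae_iff]
    simpa [volume_pi] using this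
  have h' : ∀ᵐ x : Fin d → ℝ, ∀ i : Fin d, ∀ k : ℤ, x i ≠ k * ε := by
    rw [ae_all_iff]; intro i; rw [ae_all_iff]; exact h i
  filter_upwards [h'] with x hx
  refine ⟨fun i => ⌊x i / ε⌋, fun i => ⟨?_, ?_⟩⟩
  · refine lt_of_le_of_ne ?_ (hx i _).symm
    rw [← le_div_iff₀ hε]
    exact Int.floor_le _
  · rw [← div_lt_iff₀ hε]
    exact Int.lt_floor_add_one _

lemma aux_cell_eq {d : ℕ} (ε : ℝ) (q : Fin d → ℤ) :
    gridCell ε q = Set.univ.pi fun i => Set.Ioo ((q i : ℝ) * ε) (((q i : ℝ) + 1) * ε) := by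
  ext x; simp [gridCell]

lemma aux_cell_open {d : ℕ} (ε : ℝ) (q : Fin d → ℤ) : IsOpen (gridCell ε q) := by
  rw [aux_cell_eq]
  exact isOpen_set_pi Set.finite_univ fun i _ => isOpen_Ioo

lemma aux_V_meas {d : ℕ} {ε α β : ℝ} (hε : 0 < ε) {V : (Fin d → ℝ) → ℝ}
    (hV : IsGridPotential ε α β V) : AEStronglyMeasurable V volume := by
  classical
  set U : Set (Fin d → ℝ) := ⋃ q ∈ {q : Fin d → ℤ | ∀ x ∈ gridCell ε q, V x = α}, gridCell ε q
    with hU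
  have hUo : IsOpen U := isOpen_biUnion fun q _ => aux_cell_open ε q
  refine ⟨U.piecewise (fun _ => α) (fun _ => β), ?_, ?_⟩
  · exact StronglyMeasurable.piecewise hUo.measurableSet stronglyMeasurable_const
      stronglyMeasurable_const
  · filter_upwards [aux_ae (d := d) hε] with x hx
    obtain ⟨q, hq⟩ := hx
    by_cases hxU : x ∈ U
    · rw [Set.piecewise_eq_of_mem _ _ _ hxU]
      simp only [hU, Set.mem_iUnion] at hxU
      obtain ⟨q', hq', hx'⟩ := hxU
      exact hq' x hx'
    · rw [Set.piecewise_eq_of_notMem _ _ _ hxU]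
      rcases hV.2.2 q with h | h
      · exact absurd (Set.mem_biUnion (show q ∈ {q : Fin d → ℤ | ∀ x ∈ gridCell ε q, V x = α}
          from h) hq) hxU
      · exact h x hq

lemma aux_cell_sub {d : ℕ} {ε : ℝ} (hε : 0 < ε) {p q : Fin d → ℤ} {m : ℕ}
    (h : ∀ i, q i ≤ p i ∧ p i + 1 ≤ q i + m) : gridCell ε p ⊆ gridCube ε q m := by
  intro x hx i
  have h1 : (q i : ℝ) ≤ p i := by exact_mod_cast (h i).1
  have h2 : (p i : ℝ) + 1 ≤ q i + m := by exact_mod_cast (h i).2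
  exact ⟨(mul_le_mul_of_nonneg_right h1 hε.le).trans (hx i).1.le,
    (hx i).2.le.trans (mul_le_mul_of_nonneg_right h2 hε.le)⟩

lemma aux_center {d : ℕ} {ε : ℝ} (hε : 0 < ε) (p : Fin d → ℤ) :
    (fun i => ((p i : ℝ) + 1 / 2) * ε) ∈ gridCell ε p := by
  intro i
  constructor <;> nlinarith

lemma aux_cell_sub_iff {d : ℕ} {ε : ℝ} (hε : 0 < ε) {p q : Fin d → ℤ} {m : ℕ}
    (h : gridCell ε p ⊆ gridCube ε q m) (i : Fin d) : q i ≤ p i ∧ p i + 1 ≤ q i + m := by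
  have h1 := h (aux_center hε p) i
  have h2 : (q i : ℝ) ≤ p i + 1 / 2 := le_of_mul_le_mul_right h1.1 hε
  have h3 : (p i : ℝ) + 1 / 2 ≤ q i + m := le_of_mul_le_mul_right h1.2 hε
  have h4 : (q i : ℝ) < (p i + 1 : ℤ) := by push_cast; linarith
  have h5 : (p i : ℝ) < (q i + m : ℤ) := by push_cast; linarith
  rw [Int.cast_lt] at h4 h5
  omega

lemma aux_cube_sub_iff {d : ℕ} {ε : ℝ} (hε : 0 < ε) {p q : Fin d → ℤ} {k m : ℕ}
    (h : gridCube ε p k ⊆ gridCube ε q m) (i : Fin d) : q i ≤ p i ∧ p i + k ≤ q i + m := by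
  have h1 := (h (a := fun i => (p i : ℝ) * ε) (fun i => ⟨le_rfl, by
    have : (0 : ℝ) ≤ k := by positivity
    nlinarith⟩) i).1
  have h2 := (h (a := fun i => ((p i : ℝ) + k) * ε) (fun i => ⟨by
    have : (0 : ℝ) ≤ k := by positivity
    nlinarith, le_rfl⟩) i).2
  have h3 := le_of_mul_le_mul_right h1 hε
  have h4 := le_of_mul_le_mul_right h2 hε
  exact ⟨by exact_mod_cast h3, by exact_mod_cast h4⟩

/-- cells of an alpha cube are alpha cells -/
lemma aux_alpha_cell {d : ℕ} {ε α β : ℝ} (hε : 0 < ε) {V : (Fin d → ℝ) → ℝ}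
    (hab : α ≠ β) {q p : Fin d → ℤ} {m : ℕ}
    (h : IsAlphaCube ε α V q m) (hp : gridCell ε p ⊆ gridCube ε q m) :
    ¬ (∀ x ∈ gridCell ε p, V x = β) := by
  intro hb
  have h1 := h.2 (hp (aux_center hε p))
  rw [_root_.mem_closure_iff] at h1
  obtain ⟨y, hy, hy'⟩ := h1 _ (aux_cell_open ε p) (aux_center hε p)
  exact hab (hy'.symm.trans (hb y hy))

/-- a cube all of whose cells are alpha cells is an alpha cube -/
lemma aux_cube_alpha {d : ℕ} {ε α : ℝ} (hε : 0 < ε) {V : (Fin d → ℝ) → ℝ}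
    {q : Fin d → ℤ} {m : ℕ} (hm : 1 ≤ m)
    (h : ∀ r : Fin d → Fin m, ∀ x ∈ gridCell ε (fun i => q i + (r i : ℕ)), V x = α) :
    IsAlphaCube ε α V q m := by
  refine ⟨hm, fun x hx => ?_⟩
  have hr : ∀ i, ∃ r : Fin m, ((q i : ℝ) + (r : ℕ)) * ε ≤ x i ∧
      x i ≤ ((q i : ℝ) + (r : ℕ) + 1) * ε := by
    intro i
    obtain ⟨hx1, hx2⟩ := hx i
    by_cases hlt : x i < ((q i : ℝ) + m) * ε
    · have f1 := Int.floor_le (x i / ε)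
      have f2 := Int.lt_floor_add_one (x i / ε)
      have g1 : q i ≤ ⌊x i / ε⌋ := by
        rw [Int.le_floor, le_div_iff₀ hε]; exact hx1
      have g2 : ⌊x i / ε⌋ < q i + m := by
        rw [Int.floor_lt, div_lt_iff₀ hε]; push_cast; exact hlt
      obtain ⟨s, hs⟩ := Int.eq_ofNat_of_zero_le (sub_nonneg.2 g1)
      have hs' : (⌊x i / ε⌋ : ℝ) = q i + s := by
        have : ⌊x i / ε⌋ = q i + s := by omega
        rw [this]; push_cast; ring
      rw [hs'] at f1 f2
      exact ⟨⟨s, by omega⟩, (le_div_iff₀ hε).1 f1, ((div_lt_iff₀ hε).1 f2).le⟩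
    · refine ⟨⟨m - 1, by omega⟩, ?_, ?_⟩
      · push Not at hlt
        simp only [Nat.cast_sub hm, Nat.cast_one]
        nlinarith
      · simp only [Nat.cast_sub hm, Nat.cast_one]
        have : (q i : ℝ) + (m - 1) + 1 = q i + m := by ring
        rw [this]; exact hx2
  choose r hr using hr
  refine closure_mono (h r) ?_
  rw [aux_cell_eq, closure_pi_set]
  intro i _
  beta_reduce
  rw [closure_Ioo]
  · push_cast; exact hr i
  · intro hh
    nlinarith

/-- translation of cells -/
lemma aux_cell_shift {d : ℕ} {ε : ℝ} {n : ℕ} (hn : ε * n = 1) {p k : Fin d → ℤ}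
    {V : (Fin d → ℝ) → ℝ} (hV : ZPeriodic V) {b : ℝ} (h : ∀ x ∈ gridCell ε p, V x = b) :
    ∀ x ∈ gridCell ε (fun i => p i + n * k i), V x = b := by
  intro x hx
  have h1 := hV (x - fun i => (k i : ℝ)) k
  rw [sub_add_cancel] at h1
  rw [h1]
  refine h _ fun i => ?_
  have h2 := hx i
  push_cast at h2
  have h3 : (n : ℝ) * k i * ε = k i := by linear_combination (k i : ℝ) * hn
  simp only [Pi.sub_apply]
  constructor <;> nlinarith [h2.1, h2.2]

lemma aux_bound {d : ℕ} {ε α β : ℝ} (hε : 0 < ε) {n : ℕ} (hn0 : 0 < n) (hn : ε * n = 1)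
    {V : (Fin d → ℝ) → ℝ} (hab : α ≠ β) (hV : ZPeriodic V) {q0 : Fin d → ℤ}
    (hq0 : ∀ x ∈ gridCell ε q0, V x = β) {q : Fin d → ℤ} {m : ℕ}
    (h : IsAlphaCube ε α V q m) : m < n := by
  by_contra hlt
  push Not at hlt
  have hs := aux_cell_shift hn (k := fun i => -((q0 i - q i) / n)) hV hq0
  refine aux_alpha_cell hε hab h (aux_cell_sub hε fun i => ?_) hs
  have h1 := Int.emod_add_mul_ediv (q0 i - q i) n
  have h2 := Int.emod_nonneg (q0 i - q i) (b := (n : ℤ)) (by omega)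
  have h3 := Int.emod_lt_of_pos (q0 i - q i) (b := (n : ℤ)) (by omega)
  have : q0 i + n * -((q0 i - q i) / n) = q i + (q0 i - q i) % n := by linarith
  simp only [this]
  omega

lemma aux_exists_max {d : ℕ} (hd : 1 ≤ d) {ε α β : ℝ} (hε : 0 < ε) {n : ℕ} (hn0 : 0 < n)
    (hn : ε * n = 1)
    {V : (Fin d → ℝ) → ℝ} (hab : α ≠ β) (hV : ZPeriodic V) {q0 : Fin d → ℤ}
    (hq0 : ∀ x ∈ gridCell ε q0, V x = β) {q : Fin d → ℤ} {m : ℕ}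
    (h : IsAlphaCube ε α V q m) :
    ∃ q' m', IsMaxAlphaCube ε α V q' m' ∧ gridCube ε q m ⊆ gridCube ε q' m' := by
  classical
  let P : ℕ → Prop := fun k => ∃ q', IsAlphaCube ε α V q' k ∧ gridCube ε q m ⊆ gridCube ε q' k
  have hP : P m := ⟨q, h, subset_rfl⟩
  have hb : m ≤ n := (aux_bound hε hn0 hn hab hV hq0 h).le
  have hs : P (Nat.findGreatest P n) := Nat.findGreatest_spec hb hP
  obtain ⟨q', h1, h2⟩ := hs
  refine ⟨q', _, ⟨h1, fun q'' m'' h3 h4 => ?_⟩, h2⟩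
  have h5 : m'' ≤ Nat.findGreatest P n :=
    Nat.le_findGreatest (aux_bound hε hn0 hn hab hV hq0 h3).le ⟨q'', h3, h2.trans h4⟩
  have h6 := aux_cube_sub_iff hε h4
  have h7 : m'' = Nat.findGreatest P n := by
    have := h6 ⟨0, hd⟩
    omega
  have h8 : q' = q'' := by
    funext i
    have := h6 i
    omega
  rw [h7, h8]

lemma aux_ne {d : ℕ} (hd : 1 ≤ d) {ε α β : ℝ} (hε : 0 < ε) {V : (Fin d → ℝ) → ℝ} {L : ℕ}
    (hV : ∀ x, V x = α ∨ V x = β) (hL : IsValleyWidth ε α V L) : α ≠ β := by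
  rintro rfl
  have hall : ∀ q m, 1 ≤ m → IsAlphaCube ε α V q m := fun q m hm =>
    ⟨hm, fun x _ => subset_closure (by simpa using hV x)⟩
  rcases hL with h | h
  · obtain ⟨⟨q, hq⟩, -⟩ := h
    have h1 := hq.2 q (L + 1) (hall q _ (by omega)) (by
      intro x hx i
      refine ⟨(hx i).1, (hx i).2.trans ?_⟩
      push_cast
      nlinarith)
    have := aux_cube_sub_iff hε h1.symm.subset ⟨0, hd⟩
    omega
  · exact h.1 0 1 (hall 0 1 le_rfl)

lemma aux_beta {d : ℕ} (hd : 1 ≤ d) {ε α β : ℝ} (hε : 0 < ε) {n : ℕ} (hn0 : 0 < n)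
    (hn : ε * n = 1) {V : (Fin d → ℝ) → ℝ} (hab : α ≠ β)
    (hV : IsGridPotential ε α β V) {q0 : Fin d → ℤ}
    (hq0 : ∀ x ∈ gridCell ε q0, V x = β) {L : ℕ} (hL : IsValleyWidth ε α V L) (q : Fin d → ℤ) :
    ∃ r : Fin d → Fin (L + 1), ∀ x ∈ gridCell ε (fun i => q i + (r i : ℕ)), V x = β := by
  by_contra hcon
  push Not at hcon
  have hc : IsAlphaCube ε α V q (L + 1) := by
    refine aux_cube_alpha hε (by omega) fun r => ?_
    rcases hV.2.2 (fun i => q i + (r i : ℕ)) with h | h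
    · exact h
    · obtain ⟨x, hx, hx'⟩ := hcon r
      exact absurd (h x hx) hx'
  rcases hL with h | h
  · obtain ⟨q', m', h1, h2⟩ := aux_exists_max hd hε hn0 hn hab hV.1 hq0 hc
    have h3 := h.2 ⟨q', h1⟩
    have := aux_cube_sub_iff hε h2 ⟨0, hd⟩
    push_cast at this
    omega
  · exact h.1 _ _ hc

lemma aux_L_pos {d : ℕ} {ε α : ℝ} {V : (Fin d → ℝ) → ℝ} {L : ℕ}
    (hL : IsValleyWidth ε α V L) : 1 ≤ L := by
  rcases hL with h | h
  · obtain ⟨⟨q, hq⟩, -⟩ := h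
    exact hq.1.1
  · omega

lemma aux_kappa_pos {d : ℕ} (hd : 1 ≤ d) {ε α β : ℝ} (hε : 0 < ε) {n : ℕ} (hn0 : 0 < n)
    (hn : ε * n = 1) {V : (Fin d → ℝ) → ℝ} (hab : α ≠ β)
    (hV : ZPeriodic V) {q0 : Fin d → ℤ}
    (hq0 : ∀ x ∈ gridCell ε q0, V x = β) {κ : ℕ} (hκ : IsOverlapNumber ε α V κ) : 1 ≤ κ := by
  obtain ⟨⟨q, hq, rfl⟩, -⟩ := hκ
  have hc : IsAlphaCube ε α V q 1 := by
    refine aux_cube_alpha hε le_rfl fun r => ?_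
    have : (fun i => q i + ((r i : ℕ) : ℤ)) = q := by
      funext i
      have := (r i).2
      omega
    rw [this]; exact hq
  obtain ⟨q', m', h1, h2⟩ := aux_exists_max hd hε hn0 hn hab hV hq0 hc
  have hsub : gridCell ε q ⊆ gridCube ε q 1 := aux_cell_sub hε fun i => by simp
  have hfin : {p : (Fin d → ℤ) × ℕ | IsMaxAlphaCube ε α V p.1 p.2 ∧
      gridCell ε q ⊆ gridCube ε p.1 p.2}.Finite := by
    refine Set.Finite.subset ((Set.finite_Icc (fun i => q i - n) q).prod (Set.finite_Iic n)) ?_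
    rintro ⟨p, m⟩ ⟨ha, hb⟩
    have hm := aux_bound hε hn0 hn hab hV hq0 ha.1
    refine ⟨⟨fun i => ?_, fun i => ?_⟩, hm.le⟩
    · have := aux_cell_sub_iff hε hb i
      simp only at this hm ⊢
      omega
    · exact (aux_cell_sub_iff hε hb i).1
  have : Finite {p : (Fin d → ℤ) × ℕ // IsMaxAlphaCube ε α V p.1 p.2 ∧
      gridCell ε q ⊆ gridCube ε p.1 p.2} := hfin.to_subtype
  have : Nonempty {p : (Fin d → ℤ) × ℕ // IsMaxAlphaCube ε α V p.1 p.2 ∧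
      gridCell ε q ⊆ gridCube ε p.1 p.2} := ⟨⟨(q', m'), h1, hsub.trans h2⟩⟩
  exact Nat.card_pos

lemma aux_main {d : ℕ} (hd : 1 ≤ d) {c_β : ℝ} (hcβ : 0 < c_β) {ε α β : ℝ} (hε : 0 < ε) {n : ℕ}
    (hn0 : 0 < n) (hn : ε * n = 1) (hα : 0 ≤ α) (hαβ : α ≤ β) {V : (Fin d → ℝ) → ℝ}
    (hab : α ≠ β)
    (hV : IsGridPotential ε α β V) {q0 : Fin d → ℤ} (hβ : c_β / ε ^ 2 ≤ β)
    (hq0 : ∀ x ∈ gridCell ε q0, V x = β) {L : ℕ} (hL : IsValleyWidth ε α V L)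
    {v : (Fin d → ℝ) → ℝ} (hv : ZPeriodic v) {K : NNReal} (hK : LipschitzWith K v) :
    l2sq v ≤ ((L : ℝ) + 1) ^ d * ((ε * L) ^ 2 * (2 * d + 2 / c_β)) * energySq V v := by
  have hβ0 : 0 < β := lt_of_lt_of_le (by positivity) hβ
  have hc := hK.continuous
  have hL1 : (1 : ℝ) ≤ L := by exact_mod_cast aux_L_pos hL
  have hV0 : ∀ x, 0 ≤ V x := fun x => by rcases hV.2.1 x with h | h <;> rw [h] <;> linarith
  have hVB : ∀ x, |V x| ≤ β := fun x => by
    rw [abs_of_nonneg (hV0 x)]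
    rcases hV.2.1 x with h | h <;> rw [h] <;> linarith
  have hVm := aux_V_meas hε hV
  set s : (Fin d → Fin (L + 1)) → (Fin d → ℝ) := fun r i => ε * ((r i : ℕ) : ℝ) with hs
  have hint1 : ∀ r, IntegrableOn (fun x => 2 * (v (x + s r) - v x) ^ 2) (unitCell d) := fun r =>
    aux_int (by fun_prop)
  have hint2 : ∀ r, IntegrableOn (fun x => 2 / β * (V (x + s r) * v (x + s r) ^ 2))
      (unitCell d) := by
    intro r
    refine Integrable.const_mul ?_ _
    refine aux_int_mul (g := fun x => V (x + s r)) ?_ (fun x => hVB _)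
      (f := fun x => v (x + s r) ^ 2) (by fun_prop)
    exact hVm.comp_quasiMeasurePreserving
      (measurePreserving_add_right volume (s r)).quasiMeasurePreserving
  have hpt : ∀ᵐ x, v x ^ 2 ≤ ∑ r : Fin d → Fin (L + 1),
      (2 * (v (x + s r) - v x) ^ 2 + 2 / β * (V (x + s r) * v (x + s r) ^ 2)) := by
    filter_upwards [aux_ae (d := d) hε] with x hx
    obtain ⟨q, hq⟩ := hx
    obtain ⟨r, hr⟩ := aux_beta hd hε hn0 hn hab hV hq0 hL q
    have hVx : V (x + s r) = β := by
      refine hr _ fun i => ?_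
      have := hq i
      simp only [Pi.add_apply, hs]
      push_cast
      constructor <;> nlinarith [this.1, this.2]
    have h1 : v x ^ 2 ≤ 2 * (v (x + s r) - v x) ^ 2 + 2 / β * (V (x + s r) * v (x + s r) ^ 2) := by
      rw [hVx]
      have : 2 / β * (β * v (x + s r) ^ 2) = 2 * v (x + s r) ^ 2 := by field_simp
      rw [this]
      nlinarith [sq_nonneg (2 * v (x + s r) - v x)]
    refine h1.trans ?_
    refine Finset.single_le_sum (f := fun r => 2 * (v (x + s r) - v x) ^ 2 +
      2 / β * (V (x + s r) * v (x + s r) ^ 2)) (fun r _ => ?_) (Finset.mem_univ r)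
    have := hV0 (x + s r)
    positivity
  set G := ∫ x in unitCell d, gradSq v x with hG
  set P := ∫ x in unitCell d, V x * v x ^ 2 with hP
  have hG0 : 0 ≤ G := integral_nonneg fun x => Finset.sum_nonneg fun i _ => sq_nonneg _
  have hP0 : 0 ≤ P := integral_nonneg fun x => mul_nonneg (hV0 x) (sq_nonneg _)
  have hE : energySq V v = G + P := by
    unfold energySq
    exact integral_add (aux_int_gradSq hK) (aux_int_mul hVm hVB (by fun_prop))
  have hper : ZPeriodic (fun x => V x * v x ^ 2) := by
    intro x z
    simp only [hv x z, hV.1 x z]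
  have hterm : ∀ r, ∫ x in unitCell d,
      (2 * (v (x + s r) - v x) ^ 2 + 2 / β * (V (x + s r) * v (x + s r) ^ 2)) ≤
      (ε * L) ^ 2 * (2 * d + 2 / c_β) * (G + P) := by
    intro r
    rw [integral_add (hint1 r) (hint2 r), integral_const_mul, integral_const_mul,
      aux_translate hper (s r)]
    have h1 := aux_diff hv hK (s r)
    have h2 : ∑ i, s r i ^ 2 ≤ d * (ε * L) ^ 2 := by
      calc ∑ i, s r i ^ 2 ≤ ∑ i : Fin d, (ε * L) ^ 2 := by
            refine Finset.sum_le_sum fun i _ => ?_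
            have : ((r i : ℕ) : ℝ) ≤ L := by exact_mod_cast Nat.lt_succ_iff.1 (r i).2
            simp only [hs]
            gcongr
        _ = d * (ε * L) ^ 2 := by simp
    have h3 : 2 / β ≤ 2 / c_β * (ε * L) ^ 2 := by
      have h4 : 2 / β ≤ 2 / (c_β / ε ^ 2) := by gcongr
      have h5 : 2 / (c_β / ε ^ 2) = 2 / c_β * ε ^ 2 := by field_simp
      rw [h5] at h4
      refine h4.trans ?_
      gcongr
      nlinarith
    have h6 : 0 ≤ (ε * L) ^ 2 := by positivity
    have h7 : 0 ≤ 2 / c_β := by positivity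
    calc _ ≤ 2 * (d * (ε * L) ^ 2 * G) + 2 / c_β * (ε * L) ^ 2 * P := by
          gcongr
          exact h1.trans (by gcongr)
      _ ≤ _ := by
          have a1 : 0 ≤ 2 / c_β * (ε * L) ^ 2 * G := by positivity
          have a2 : 0 ≤ (d : ℝ) * (ε * L) ^ 2 * P := by positivity
          linarith
  rw [hE]
  calc l2sq v ≤ ∫ x in unitCell d, ∑ r : Fin d → Fin (L + 1),
      (2 * (v (x + s r) - v x) ^ 2 + 2 / β * (V (x + s r) * v (x + s r) ^ 2)) := by
        refine integral_mono_ae (aux_int (by fun_prop)) ?_ (ae_restrict_of_ae hpt)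
        exact integrable_finsetSum _ fun r _ => Integrable.add (hint1 r) (hint2 r)
    _ = ∑ r : Fin d → Fin (L + 1), ∫ x in unitCell d,
      (2 * (v (x + s r) - v x) ^ 2 + 2 / β * (V (x + s r) * v (x + s r) ^ 2)) :=
        integral_finsetSum _ fun r _ => Integrable.add (hint1 r) (hint2 r)
    _ ≤ ∑ r : Fin d → Fin (L + 1), (ε * L) ^ 2 * (2 * d + 2 / c_β) * (G + P) :=
        Finset.sum_le_sum fun r _ => hterm r
    _ = _ := by
        rw [Finset.sum_const, nsmul_eq_mul]
        simp
        ring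

/-- estimate (2.2) and Lemma 2.4 of the paper: assuming the β-region is
nonempty, a cut-off function with constant `Cη` exists, and `β ≥ c_β ε⁻²`, there is a
constant `C = C(d, Cη, c_β)` with `‖v‖² ≤ C (κ L^d)² (εL)² |||v|||²` for all periodic
Lipschitz `v`; consequently the Rayleigh quotient of every nonzero such `v` is bounded
below by `C⁻¹ (κ L^d)⁻² (εL)⁻²`. -/
theorem statement1 (d : ℕ) (hd : 1 ≤ d) (Cη c_β : ℝ) (hcβ : 0 < c_β) :
    ∃ C : ℝ, 0 < C ∧
      ∀ (ε α β : ℝ) (V : (Fin d → ℝ) → ℝ) (L κ : ℕ),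
        0 < ε → (∃ n : ℕ, 0 < n ∧ ε * n = 1) →
        0 ≤ α → α ≤ β →
        IsGridPotential ε α β V →
        (∃ q : Fin d → ℤ, ∀ x ∈ gridCell ε q, V x = β) →
        (∃ η : (Fin d → ℝ) → ℝ, IsCutoff ε Cη α β V η) →
        c_β / ε ^ 2 ≤ β →
        IsValleyWidth ε α V L → IsOverlapNumber ε α V κ →
        ∀ v : (Fin d → ℝ) → ℝ, ZPeriodic v → (∃ K : NNReal, LipschitzWith K v) →
          l2sq v ≤ C * ((κ : ℝ) * (L : ℝ) ^ d) ^ 2 * (ε * (L : ℝ)) ^ 2 * energySq V v ∧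
            (v ≠ 0 →
              (C * ((κ : ℝ) * (L : ℝ) ^ d) ^ 2 * (ε * (L : ℝ)) ^ 2)⁻¹ ≤
                energySq V v / l2sq v) := by
  refine ⟨2 ^ d * (2 * d + 2 / c_β), by positivity, ?_⟩
  rintro ε α β V L κ hε ⟨n, hn0, hn⟩ hα hαβ hV ⟨q0, hq0⟩ - hβ hL hκ v hv ⟨K, hK⟩
  have hab := aux_ne hd hε hV.2.1 hL
  have hL1 : (1 : ℝ) ≤ L := by exact_mod_cast aux_L_pos hL
  have hκ1 : (1 : ℝ) ≤ κ := by
    exact_mod_cast aux_kappa_pos hd hε hn0 hn hab hV.1 hq0 hκ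
  have hV0 : ∀ x, 0 ≤ V x := fun x => by rcases hV.2.1 x with h | h <;> rw [h] <;> linarith
  have hE0 : 0 ≤ energySq V v := integral_nonneg fun x =>
    add_nonneg (Finset.sum_nonneg fun i _ => sq_nonneg _) (mul_nonneg (hV0 x) (sq_nonneg _))
  have hmain := aux_main hd hcβ hε hn0 hn hα hαβ hab hV hβ hq0 hL hv hK
  have hfin : l2sq v ≤ 2 ^ d * (2 * d + 2 / c_β) * ((κ : ℝ) * (L : ℝ) ^ d) ^ 2 *
      (ε * (L : ℝ)) ^ 2 * energySq V v := by
    refine hmain.trans ?_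
    have h1 : ((L : ℝ) + 1) ^ d ≤ 2 ^ d * ((κ : ℝ) * (L : ℝ) ^ d) ^ 2 := by
      have h2 : ((L : ℝ) + 1) ^ d ≤ (2 * L) ^ d := by
        gcongr
        linarith
      rw [mul_pow] at h2
      refine h2.trans ?_
      gcongr
      have h3 : (1 : ℝ) ≤ (L : ℝ) ^ d := one_le_pow₀ hL1
      have h4 : (L : ℝ) ^ d ≤ κ * (L : ℝ) ^ d := by nlinarith
      nlinarith
    calc _ ≤ (2 ^ d * ((κ : ℝ) * (L : ℝ) ^ d) ^ 2) * ((ε * L) ^ 2 * (2 * d + 2 / c_β)) *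
          energySq V v := by gcongr
      _ = _ := by ring
  refine ⟨hfin, fun h0 => ?_⟩
  have hpos := aux_pos hv hK.continuous h0
  have hκ0 : (0 : ℝ) < κ := by linarith
  have hL0 : (0 : ℝ) < L := by linarith
  rw [le_div_iff₀ hpos, inv_mul_le_iff₀ (by positivity)]
  exact hfin

end
end

section
/- Let H be a real Hilbert space with inner product a and norm |||·|||, let (u_i)_{i≥1} be a complete orthogonal family with a(u_i,u_i) = E_i and 0 < E_1 ≤ E_2 ≤ …, and let B : H → H be the bounded linear operator with B u_i = (E_1/E_i) u_i (so |||B||| ≤ 1). Fix K ≥ 1 and set q := E_1/E_{K+1}. Let P̂ : H → H be linear with |||v − P̂ v||| ≤ γ |||v||| for all v. Suppose v⁽⁰⁾ ∈ H satisfies a(v⁽⁰⁾, u_1) = E_1 and a(v⁽⁰⁾, u_i) = 0 for 2 ≤ i ≤ K, and define the inexact iterates ṽ⁽⁰⁾ := v⁽⁰⁾, ṽ⁽ᵏ⁾ := ṽ⁽ᵏ⁻¹⁾ + P̂ (B ṽ⁽ᵏ⁻¹⁾ − ṽ⁽ᵏ⁻¹⁾). Then for every k ∈ ℕ: |||ṽ⁽ᵏ⁾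 − u_1||| ≤ q^k |||v⁽⁰⁾ − u_1||| + 2γ (Σ_{ν=0}^{k−1} (1+2γ)^ν) |||v⁽⁰⁾|||. In particular, if γ ≤ q^k =: tol, then |||ṽ⁽ᵏ⁾ − u_1||| ≤ tol · (|||v⁽⁰⁾ − u_1||| + 2(1+2γ)^k |||v⁽⁰⁾|||). (Abstract form of Theorem 4.3 of the paper: convergence of the inexact block iteration.) -/
open scoped RealInnerProductSpace BigOperators

/-- Bound for an operator that is diagonal in a complete orthogonal family. -/
lemma diag_bound {H : Type*} [NormedAddCommGroup H] [InnerProductSpace ℝ H]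
    [CompleteSpace H]
    (u : ℕ → H) (hne : ∀ i, u i ≠ 0)
    (horth : ∀ i j, i ≠ j → ⟪u i, u j⟫ = 0)
    (hcomplete : (Submodule.span ℝ (Set.range u)).topologicalClosure = ⊤)
    (C : H →L[ℝ] H) (c : ℕ → ℝ) (hC : ∀ i, C (u i) = c i • u i)
    (x : H) (M : ℝ) (hM : 0 ≤ M) (hx : ∀ i, ⟪x, u i⟫ ≠ 0 → |c i| ≤ M) :
    ‖C x‖ ≤ M * ‖x‖ := by
  have hn : ∀ i, 0 < ‖u i‖ := fun i => norm_pos_iff.mpr (hne i)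
  let w : ℕ → H := fun i => (‖u i‖)⁻¹ • u i
  have hw : Orthonormal ℝ w := by
    constructor
    · intro i
      simp only [w, norm_smul, norm_inv, norm_norm]
      exact inv_mul_cancel₀ (hn i).ne'
    · intro i j hij
      simp only [w, inner_smul_left, inner_smul_right, horth i j hij, mul_zero]
  have hspan : ⊤ ≤ (Submodule.span ℝ (Set.range w)).topologicalClosure := by
    rw [← hcomplete]
    apply Submodule.topologicalClosure_mono
    rw [Submodule.span_le]
    rintro _ ⟨i, rfl⟩
    have : u i = ‖u i‖ • w i := by
      simp only [w, smul_smul]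
      rw [mul_inv_cancel₀ (hn i).ne', one_smul]
    rw [this]
    exact Submodule.smul_mem _ _ (Submodule.subset_span ⟨i, rfl⟩)
  let b : HilbertBasis ℕ ℝ H := HilbertBasis.mk hw hspan
  have hb : ∀ i, b i = w i := fun i => by simp [b]
  have hCb : ∀ i, C (b i) = c i • b i := by
    intro i
    rw [hb]
    simp only [w, map_smul, hC, smul_comm (c i)]
  have hexp : ∀ i, ⟪b i, C x⟫ = c i * ⟪b i, x⟫ := by
    intro i
    have h1 := (b.hasSum_repr x).mapL C
    have h2 := h1.mapL (innerSL ℝ (b i))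
    have h3 : HasSum (fun j => (innerSL ℝ (b i)) (C (b.repr x j • b j))) (c i * ⟪b i, x⟫) := by
      have : ∀ j, j ≠ i → (innerSL ℝ (b i)) (C (b.repr x j • b j)) = 0 := by
        intro j hj
        rw [map_smul, hCb]
        simp [b.orthonormal.2 hj.symm]
      have h4 := hasSum_single i this
      convert h4 using 1
      rw [map_smul, hCb, b.repr_apply_apply]
      simp [b.orthonormal.1 i]
      ring
    exact h2.unique h3
  have hp1 := b.hasSum_inner_mul_inner (C x) (C x)
  have hp2 := (b.hasSum_inner_mul_inner x x).mul_left (M ^ 2)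
  have hle := hasSum_le (fun i => by
    change ⟪C x, b i⟫ * ⟪b i, C x⟫ ≤ M ^ 2 * (⟪x, b i⟫ * ⟪b i, x⟫)
    rw [real_inner_comm (b i) (C x), real_inner_comm (b i) x, hexp]
    by_cases h : ⟪b i, x⟫ = 0
    · simp [h]
    · have h5 : |c i| ≤ M := by
        apply hx
        intro h6
        apply h
        rw [hb, real_inner_comm]
        simp only [w, inner_smul_right, h6, mul_zero]
      have h7 : c i ^ 2 ≤ M ^ 2 := sq_le_sq' (by linarith [neg_abs_le (c i)]) (by linarith [le_abs_self (c i)])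
      nlinarith [mul_le_mul_of_nonneg_right h7 (sq_nonneg ⟪b i, x⟫)]) hp1 hp2
  rw [real_inner_self_eq_norm_sq, real_inner_self_eq_norm_sq, ← mul_pow] at hle
  exact le_of_sq_le_sq hle (by positivity)

/-- Coefficients bounding `‖B^m (1-B)‖`. -/
noncomputable def acoef (m : ℕ) : ℝ := if m = 0 then 1 else 1 / (2 * ((m : ℝ) + 1))

lemma acoef_nonneg (m : ℕ) : 0 ≤ acoef m := by
  unfold acoef; split_ifs <;> positivity

lemma pow_mul_le_acoef (t : ℝ) (h0 : 0 < t) (h1 : t ≤ 1) (m : ℕ) :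
    t ^ m * (1 - t) ≤ acoef m := by
  unfold acoef
  split_ifs with hm
  · subst hm; simp; linarith
  · have hm1 : (1 : ℝ) ≤ m := by exact_mod_cast Nat.one_le_iff_ne_zero.mpr hm
    have hmp : (0 : ℝ) < m := by linarith
    -- s = t (m+1)/m
    obtain ⟨s, hs⟩ : ∃ s, s = t * (m + 1) / m := ⟨_, rfl⟩
    have hs0 : 0 < s := by rw [hs]; positivity
    have key : (m + 1) * s ^ m - m * s ^ (m + 1) ≤ 1 := by
      have hb := one_add_mul_le_pow (a := s⁻¹ - 1) (by linarith [inv_pos.mpr hs0]) (m + 1)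
      have h2 := mul_le_mul_of_nonneg_right hb (pow_pos hs0 (m + 1)).le
      have e1 : (1 + (s⁻¹ - 1)) ^ (m + 1) * s ^ (m + 1) = 1 := by
        rw [← mul_pow, add_sub_cancel, inv_mul_cancel₀ hs0.ne', one_pow]
      rw [e1] at h2
      have e2 : s⁻¹ * s ^ (m + 1) = s ^ m := by
        rw [pow_succ]; field_simp
      push_cast at h2
      nlinarith [h2, e2]
    have h3 : (2 : ℝ) ≤ (((m : ℝ) + 1) / m) ^ m := by
      have hb := one_add_mul_le_pow (a := (1 : ℝ) / m) (by have : (0:ℝ) < 1 / m := by positivity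
                                                           linarith) m
      have e : (1 : ℝ) + 1 / m = (m + 1) / m := by field_simp
      have e' : (m : ℝ) * (1 / m) = 1 := by field_simp
      rw [e, e'] at hb
      linarith
    have e3 : (m + 1) * s ^ m - m * s ^ (m + 1)
        = (((m : ℝ) + 1) / m) ^ m * (t ^ m * (1 - t) * (m + 1)) := by
      have : s = (((m : ℝ) + 1) / m) * t := by rw [hs]; ring
      have h5 : (m : ℝ) * s = (m + 1) * t := by rw [hs]; field_simp
      calc (m + 1) * s ^ m - m * s ^ (m + 1) = s ^ m * (m + 1 - m * s) := by ring
        _ = _ := by rw [h5, this, mul_pow]; ring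
    rw [e3] at key
    have hn : 0 ≤ t ^ m * (1 - t) * (m + 1) :=
      mul_nonneg (mul_nonneg (pow_nonneg h0.le _) (by linarith)) (by linarith)
    have h6 := mul_le_mul_of_nonneg_right h3 hn
    rw [le_div_iff₀ (by positivity)]
    nlinarith

noncomputable def lcoef (k : ℕ) : ℝ := ∑ m ∈ Finset.range k, acoef m

lemma lcoef_succ (k : ℕ) (hk : k ≠ 0) :
    lcoef (k + 1) = lcoef k + 1 / (2 * ((k : ℝ) + 1)) := by
  unfold lcoef
  rw [Finset.sum_range_succ]
  simp [acoef, hk]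

lemma lcoef_mono {j k : ℕ} (h : j ≤ k) : lcoef j ≤ lcoef k := by
  unfold lcoef
  exact Finset.sum_le_sum_of_subset_of_nonneg (by simpa using h) (fun i _ _ => acoef_nonneg i)

lemma lcoef_three : lcoef 3 = 17 / 12 := by
  simp [lcoef, Finset.sum_range_succ, acoef]; norm_num

lemma lcoef_facts (n : ℕ) :
    1 ≤ lcoef (n + 3) ∧ lcoef (n + 3) - 1 ≤ 14 / 100 * ((n : ℝ) + 3) ∧
    lcoef (n + 3) ^ 2 ≤ 67 / 100 * ((n : ℝ) + 3) := by
  induction n with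
  | zero => simp only [Nat.zero_add, lcoef_three]; norm_num
  | succ n ih =>
    obtain ⟨h1, h2, h3⟩ := ih
    have e := lcoef_succ (n + 3) (by omega)
    have e' : n + 1 + 3 = n + 3 + 1 := by ring
    rw [e', e]
    push_cast
    have hn : (0 : ℝ) ≤ n := by positivity
    generalize lcoef (n + 3) = l at *
    have hh : 1 / (2 * ((n : ℝ) + 3 + 1)) ≤ 1 / 8 := by
      apply one_div_le_one_div_of_le <;> linarith
    have hh0 : 0 < 1 / (2 * ((n : ℝ) + 3 + 1)) := by positivity
    have hmul : 1 / (2 * ((n : ℝ) + 3 + 1)) * (2 * ((n : ℝ) + 3 + 1)) = 1 := by field_simp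
    generalize 1 / (2 * ((n : ℝ) + 3 + 1)) = h at *
    refine ⟨by linarith, by linarith, ?_⟩
    have : l * h ≤ (1 + 14 / 100 * ((n : ℝ) + 3)) * h := mul_le_mul_of_nonneg_right (by linarith) hh0.le
    nlinarith

lemma lcoef_cubic_large (n : ℕ) :
    2 ≤ lcoef (n + 11) ∧ lcoef (n + 11) ^ 2 * (lcoef (n + 11) - 1) ≤ 4 / 10 * ((n : ℝ) + 11) := by
  induction n with
  | zero =>
    have : lcoef 11 = 111431 / 55440 := by
      simp [lcoef, Finset.sum_range_succ, acoef]; norm_num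
    simp only [Nat.zero_add, this]; norm_num
  | succ n ih =>
    obtain ⟨h1, h2⟩ := ih
    have e := lcoef_succ (n + 11) (by omega)
    have e' : n + 1 + 11 = n + 11 + 1 := by ring
    rw [e', e]
    push_cast
    have hn : (0 : ℝ) ≤ n := by positivity
    generalize lcoef (n + 11) = l at *
    have hh : 1 / (2 * ((n : ℝ) + 11 + 1)) ≤ 1 / 24 := by
      apply one_div_le_one_div_of_le <;> linarith
    have hh0 : 0 < 1 / (2 * ((n : ℝ) + 11 + 1)) := by positivity
    have hmul : 1 / (2 * ((n : ℝ) + 11 + 1)) * (2 * ((n : ℝ) + 11 + 1)) = 1 := by field_simp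
    generalize 1 / (2 * ((n : ℝ) + 11 + 1)) = h at *
    refine ⟨by linarith, ?_⟩
    have hk : 2 * (5 / 2 * (l ^ 2 * (l - 1)) + 1) * h ≤ 1 := by
      have h3 := mul_le_mul_of_nonneg_right h2 hh0.le
      linarith
    -- increment
    have hpoly : 3 * l ^ 2 - 2 * l + (3 * l - 1) / 24 + 1 / 576
        ≤ 4 / 10 * (2 * (5 / 2 * (l ^ 2 * (l - 1)) + 1)) := by
      nlinarith [mul_nonneg (sub_nonneg.2 h1) (sub_nonneg.2 h1), mul_nonneg (mul_nonneg (sub_nonneg.2 h1) (sub_nonneg.2 h1)) (sub_nonneg.2 h1)]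
    have h4 := mul_le_mul_of_nonneg_right hpoly hh0.le
    have h5 : h * h ≤ h / 24 := by nlinarith
    have h6 : h * h * h ≤ h / 576 := by nlinarith
    have h7 : (3 * l - 1) * (h * h) ≤ (3 * l - 1) * (h / 24) :=
      mul_le_mul_of_nonneg_left h5 (by linarith)
    nlinarith

lemma lcoef_cubic (k : ℕ) (hk : 3 ≤ k) :
    lcoef k ^ 2 * (lcoef k - 1) ≤ 4 / 10 * (k : ℝ) := by
  by_cases h : 11 ≤ k
  · obtain ⟨n, rfl⟩ := Nat.exists_eq_add_of_le' h
    have := (lcoef_cubic_large n).2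
    push_cast; exact this
  · have : k = 3 ∨ k = 4 ∨ k = 5 ∨ k = 6 ∨ k = 7 ∨ k = 8 ∨ k = 9 ∨ k = 10 := by omega
    rcases this with rfl | rfl | rfl | rfl | rfl | rfl | rfl | rfl <;>
    · simp [lcoef, Finset.sum_range_succ, acoef]; norm_num

lemma pow_two_terms (x : ℝ) (hx : 0 ≤ x) (k : ℕ) :
    1 + k * x + (k : ℝ) * (k - 1) / 2 * x ^ 2 ≤ (1 + x) ^ k := by
  induction k with
  | zero => simp
  | succ k ih =>
    rw [pow_succ]
    have h := mul_le_mul_of_nonneg_right ih (by linarith : 0 ≤ 1 + x)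
    refine le_trans ?_ h
    push_cast
    have hk : (0 : ℝ) ≤ (k : ℝ) * (k - 1) := by
      rcases Nat.eq_zero_or_pos k with rfl | hk
      · simp
      · have : (1 : ℝ) ≤ k := by exact_mod_cast hk
        nlinarith
    nlinarith [mul_nonneg hk (pow_nonneg hx 3)]

/-- trivial regime -/
lemma scalar_T (g : ℝ) (k : ℕ) (hg : 0 ≤ g) (h : k ≤ 2 ∨ 8 / 25 ≤ g) :
    (1 + g) ^ k - 1 ≤ 2 * g * (1 + 2 * g) ^ k := by
  have h0 : k = 0 ∨ k = 1 ∨ k = 2 → (1 + g) ^ k - 1 ≤ 2 * g * (1 + 2 * g) ^ k := by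
    rintro (rfl | rfl | rfl)
    · simp; exact hg
    · nlinarith
    · nlinarith [pow_nonneg hg 3, pow_nonneg hg 2]
  rcases h with h | h
  · apply h0; omega
  · rcases Nat.eq_zero_or_pos k with rfl | hk
    · exact h0 (by simp)
    · induction k, hk using Nat.le_induction with
      | base => exact h0 (by simp)
      | succ n hn ih =>
        have ih := ih (by
          rintro (rfl | rfl | rfl)
          · simp; exact hg
          · nlinarith
          · nlinarith [pow_nonneg hg 3, pow_nonneg hg 2])
        have hW : 41 / 25 ≤ (1 + 2 * g) ^ n := by
          calc (41 / 25 : ℝ) ≤ (1 + 2 * g) := by linarith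
            _ = (1 + 2 * g) ^ 1 := by simp
            _ ≤ _ := pow_le_pow_right₀ (by linarith) hn
        rw [pow_succ, pow_succ]
        have h1 := mul_le_mul_of_nonneg_right ih (by linarith : 0 ≤ 1 + g)
        have h2 : 1 ≤ 2 * g * (1 + 2 * g) ^ n := by nlinarith
        nlinarith [mul_le_mul_of_nonneg_left h2 hg]

/-- regime A -/
lemma scalar_A (g l : ℝ) (k : ℕ) (hk : 3 ≤ k) (hg : 0 ≤ g) (hg3 : g ≤ 8 / 25)
    (hA : (1 + g) * (l - 1) ≤ k * g) :
    (1 + g) * (1 + l * (1 + g) ^ (k - 1)) ≤ (1 - g) * (2 * (1 + 2 * g) ^ k - g) := by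
  have hVW : l * (1 + g) ^ k ≤ (1 + 2 * g) ^ k := by
    have hb := one_add_mul_le_pow (a := g / (1 + g)) (by
      have : 0 ≤ g / (1 + g) := by positivity
      linarith) k
    have h1 : l ≤ (1 + g / (1 + g)) ^ k := by
      refine le_trans ?_ hb
      have : l - 1 ≤ k * g / (1 + g) := by
        rw [le_div_iff₀ (by linarith)]; linarith
      rw [mul_div_assoc] at this
      linarith
    have e : (1 + 2 * g) ^ k = (1 + g / (1 + g)) ^ k * (1 + g) ^ k := by
      rw [← mul_pow]; congr 1; field_simp; ring
    rw [e]
    exact mul_le_mul_of_nonneg_right h1 (by positivity)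
  have e : (1 + g) * (1 + g) ^ (k - 1) = (1 + g) ^ k := by
    rw [← pow_succ']; congr 1; omega
  have hW : (1 + 2 * g) ^ 3 ≤ (1 + 2 * g) ^ k := pow_le_pow_right₀ (by linarith) hk
  have h2 : (1 + 2 * g) ^ 3 * (1 - 2 * g) ≤ (1 + 2 * g) ^ k * (1 - 2 * g) :=
    mul_le_mul_of_nonneg_right hW (by linarith)
  have h3 : 1 + 2 * g - g ^ 2 ≤ (1 + 2 * g) ^ 3 * (1 - 2 * g) := by
    have : 0 ≤ g * (2 + g - 16 * g ^ 2 - 16 * g ^ 3) := by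
      apply mul_nonneg hg
      have a1 : g ^ 2 ≤ 8 / 25 * g := by nlinarith
      have a2 : g ^ 3 ≤ 64 / 625 * g := by nlinarith
      nlinarith
    nlinarith
  have : (1 + g) * (1 + l * (1 + g) ^ (k - 1)) = (1 + g) + l * ((1 + g) * (1 + g) ^ (k - 1)) := by
    ring
  rw [this, e]
  nlinarith

/-- regime B -/
lemma scalar_B (g l : ℝ) (k : ℕ) (hk : 3 ≤ k) (hg : 0 ≤ g)
    (hB : k * g ≤ (1 + g) * (l - 1)) (h1 : 1 ≤ l) (h2 : l - 1 ≤ 14 / 100 * (k : ℝ))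
    (h3 : l ^ 2 ≤ 67 / 100 * (k : ℝ)) (h4 : l ^ 2 * (l - 1) ≤ 4 / 10 * (k : ℝ)) :
    (1 + g) * (7 / 4 + l ^ 2 * g + l * g + l ^ 2 * g * (1 + g) ^ (k - 2))
      ≤ (1 - g) * (2 * (1 + 2 * g) ^ k - g) := by
  have hk3 : (3 : ℝ) ≤ k := by exact_mod_cast hk
  have hkp : (0 : ℝ) < k := by linarith
  have hgs : g ≤ 163 / 1000 := by
    have : k * g ≤ k * ((1 + g) * (14 / 100)) := by nlinarith
    have := le_of_mul_le_mul_left this hkp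
    linarith
  have heps : l ^ 2 * g ≤ 4 / 10 * (1 + g) := by
    have a : k * (l ^ 2 * g) ≤ k * (4 / 10 * (1 + g)) := by
      have b1 := mul_le_mul_of_nonneg_left hB (sq_nonneg l)
      have b2 := mul_le_mul_of_nonneg_left h4 (by linarith : 0 ≤ 1 + g)
      linarith
    exact le_of_mul_le_mul_left a hkp
  have hZ : (1 + g) ^ 2 * (1 + g) ^ (k - 2) ≤ (1 + 2 * g) ^ k := by
    rw [← pow_add]
    have : 2 + (k - 2) = k := by omega
    rw [this]
    exact pow_le_pow_left₀ (by linarith) (by linarith) k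
  have hW := pow_two_terms (2 * g) (by linarith) k
  generalize (1 + 2 * g) ^ k = W at *
  have hZ0 : 0 ≤ (1 + g) ^ (k - 2) := by positivity
  generalize (1 + g) ^ (k - 2) = Z at *
  obtain ⟨y, hy⟩ : ∃ y, y = k * g := ⟨_, rfl⟩
  have hy0 : 0 ≤ y := by rw [hy]; positivity
  have hy3 : 3 * g ≤ y := by rw [hy]; nlinarith
  have hW2 : 1 + 2 * y + 4 / 3 * y ^ 2 ≤ W := by
    have : 4 / 3 * y ^ 2 ≤ (k : ℝ) * (k - 1) / 2 * (2 * g) ^ 2 := by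
      have : 0 ≤ (k : ℝ) * (k - 3) * g ^ 2 :=
        mul_nonneg (mul_nonneg hkp.le (by linarith)) (sq_nonneg g)
      rw [hy]
      nlinarith
    rw [hy] at this ⊢
    linarith
  -- ε = l² g/(1+g)
  obtain ⟨ε, hε⟩ : ∃ ε, ε = l ^ 2 * g / (1 + g) := ⟨_, rfl⟩
  have hε0 : 0 ≤ ε := by rw [hε]; positivity
  have hεe : ε * (1 + g) = l ^ 2 * g := by rw [hε]; field_simp
  have hε4 : ε ≤ 4 / 10 := by
    have : ε * (1 + g) ≤ 4 / 10 * (1 + g) := by rw [hεe]; exact heps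
    exact le_of_mul_le_mul_right this (by linarith)
  have hpy : l ^ 2 * g ≤ 67 / 100 * y := by
    rw [hy]; nlinarith [mul_le_mul_of_nonneg_right h3 hg]
  have hlg : l * g ≤ 474 / 1000 * y := by
    have : l ≤ 474 / 1000 * k := by linarith
    rw [hy]; nlinarith [mul_le_mul_of_nonneg_right this hg]
  have hlast : (1 + g) * (l ^ 2 * g * Z) ≤ ε * W := by
    rw [← hεe]
    have := mul_le_mul_of_nonneg_left hZ hε0
    linarith
  have hεp : ε ≤ 67 / 100 * y := by nlinarith
  have hfac : 1274 / 1000 ≤ 2 - 2 * g - ε := by linarith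
  have hmain : (2 - 2 * g - ε) + 1274 / 1000 * (2 * y + 4 / 3 * y ^ 2) ≤ (2 - 2 * g - ε) * W := by
    have a1 := mul_le_mul_of_nonneg_left hW2 (by linarith : 0 ≤ 2 - 2 * g - ε)
    have a2 : 1274 / 1000 * (2 * y + 4 / 3 * y ^ 2) ≤ (2 - 2 * g - ε) * (2 * y + 4 / 3 * y ^ 2) :=
      mul_le_mul_of_nonneg_right hfac (by positivity)
    linarith
  have hfirst : (1 + g) * (l ^ 2 * g + l * g) ≤ 1163 / 1000 * (1144 / 1000 * y) := by
    apply mul_le_mul (by linarith) (by linarith) (by positivity) (by norm_num)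
  nlinarith [sq_nonneg (y - 3 / 10)]

lemma half_count (k : ℕ) :
    ∑ m ∈ Finset.range k, (if k < 2 * (m + 1) then 1 / ((k : ℝ) + 1) else 0) ≤ 1 / 2 := by
  rw [← Finset.sum_filter, Finset.sum_const, nsmul_eq_mul]
  have hc : (Finset.filter (fun m => k < 2 * (m + 1)) (Finset.range k)).card ≤ k - k / 2 := by
    have : Finset.filter (fun m => k < 2 * (m + 1)) (Finset.range k) ⊆ Finset.Ico (k / 2) k := by
      intro m hm
      simp only [Finset.mem_filter, Finset.mem_range, Finset.mem_Ico] at *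
      omega
    simpa using Finset.card_le_card this
  have h2 : 2 * (Finset.filter (fun m => k < 2 * (m + 1)) (Finset.range k)).card ≤ k + 1 := by omega
  have h3 : 2 * ((Finset.filter (fun m => k < 2 * (m + 1)) (Finset.range k)).card : ℝ) ≤ k + 1 := by
    exact_mod_cast h2
  rw [mul_one_div, div_le_div_iff₀ (by positivity) (by norm_num)]
  linarith

/-- main convolution sum -/
lemma conv_bound (q r : ℝ) (hq0 : 0 ≤ q) (hq1 : q ≤ 1) (k : ℕ) (hk : 3 ≤ k) (hr0 : 0 ≤ r)
    (hr : r ^ 2 = q ^ k) :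
    ∑ m ∈ Finset.range k, acoef m * q ^ (k - 1 - m) ≤ 1 / 2 + lcoef k * r := by
  have : ∀ m ∈ Finset.range k, acoef m * q ^ (k - 1 - m) ≤
      (if k < 2 * (m + 1) then 1 / ((k : ℝ) + 1) else 0) + acoef m * r := by
    intro m hm
    have hmk := Finset.mem_range.mp hm
    have ha := acoef_nonneg m
    split_ifs with h
    · have hm0 : m ≠ 0 := by omega
      have h1 : acoef m ≤ 1 / ((k : ℝ) + 1) := by
        simp only [acoef, hm0, if_false]
        apply one_div_le_one_div_of_le (by positivity)
        exact_mod_cast h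
      have h2 : q ^ (k - 1 - m) ≤ 1 := pow_le_one₀ hq0 hq1
      have h3 : acoef m * q ^ (k - 1 - m) ≤ acoef m * 1 := mul_le_mul_of_nonneg_left h2 ha
      have h4 := mul_nonneg ha hr0
      linarith
    · have h2 : q ^ (k - 1 - m) ≤ r := by
        apply le_of_sq_le_sq _ hr0
        rw [hr, ← pow_mul]
        exact pow_le_pow_of_le_one hq0 hq1 (by omega)
      have := mul_le_mul_of_nonneg_left h2 ha
      linarith
  calc _ ≤ _ := Finset.sum_le_sum this
    _ = _ + lcoef k * r := by rw [Finset.sum_add_distrib, lcoef, Finset.sum_mul]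
    _ ≤ _ := by linarith [half_count k]

/-- The scalar sequence argument. -/
lemma seq_bound (g q N : ℝ) (hg : 0 ≤ g) (hg3 : g ≤ 8 / 25) (hq0 : 0 ≤ q) (hq1 : q ≤ 1)
    (hN : 0 ≤ N) (F : ℕ → ℝ) (hF0 : F 0 ≤ N)
    (hstep : ∀ j, F (j + 1) ≤ (1 + g) * F j)
    (hconv : ∀ j, F j ≤ (1 - g) * q ^ j * N + g * N
      + g * ∑ m ∈ Finset.range j, acoef m * F (j - 1 - m))
    (k : ℕ) (hk : 3 ≤ k) (hgk : g ≤ q ^ k) :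
    (1 + g) * F k ≤ (1 - g) * (q ^ k * (1 + 2 * (1 + 2 * g) ^ k) * N) := by
  have htriv : ∀ j, F j ≤ (1 + g) ^ j * N := by
    intro j
    induction j with
    | zero => simpa using hF0
    | succ j ih =>
      calc F (j + 1) ≤ (1 + g) * F j := hstep j
        _ ≤ (1 + g) * ((1 + g) ^ j * N) := mul_le_mul_of_nonneg_left ih (by linarith)
        _ = _ := by ring
  have hsum : ∀ j n, j ≤ n + 1 → j ≤ k →
      ∑ m ∈ Finset.range j, acoef m * F (j - 1 - m) ≤ lcoef k * ((1 + g) ^ n * N) := by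
    intro j n hj hjk
    have hp : 0 ≤ (1 + g) ^ n * N := by positivity
    calc _ ≤ ∑ m ∈ Finset.range j, acoef m * ((1 + g) ^ n * N) := by
          apply Finset.sum_le_sum
          intro m hm
          apply mul_le_mul_of_nonneg_left _ (acoef_nonneg m)
          refine (htriv _).trans ?_
          apply mul_le_mul_of_nonneg_right _ hN
          exact pow_le_pow_right₀ (by linarith) (by omega)
      _ = lcoef j * ((1 + g) ^ n * N) := by rw [lcoef, Finset.sum_mul]
      _ ≤ _ := mul_le_mul_of_nonneg_right (lcoef_mono hjk) hp
  have hl0 : 1 ≤ lcoef k ∧ lcoef k - 1 ≤ 14 / 100 * (k : ℝ) ∧ lcoef k ^ 2 ≤ 67 / 100 * (k : ℝ) := by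
    obtain ⟨n, rfl⟩ := Nat.exists_eq_add_of_le' hk
    have := lcoef_facts n
    push_cast; exact this
  have hl4 := lcoef_cubic k hk
  have hθ0 : 0 ≤ q ^ k := pow_nonneg hq0 k
  have hred : ∀ Y, ∑ m ∈ Finset.range k, acoef m * F (k - 1 - m) ≤ Y * N →
      (1 + g) * (g * (1 + Y)) ≤ (1 - g) * q ^ k * (2 * (1 + 2 * g) ^ k - g) →
      (1 + g) * F k ≤ (1 - g) * (q ^ k * (1 + 2 * (1 + 2 * g) ^ k) * N) := by
    intro Y hY hfin
    have h1 := hconv k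
    have h2 := mul_le_mul_of_nonneg_left hY hg
    have h3 : F k ≤ ((1 - g) * q ^ k + g * (1 + Y)) * N := by linarith
    have h4 := mul_le_mul_of_nonneg_left h3 (by linarith : 0 ≤ 1 + g)
    have h5 := mul_le_mul_of_nonneg_right hfin hN
    linarith
  rcases le_total ((1 + g) * (lcoef k - 1)) (k * g) with hA | hB
  · have hs := scalar_A g (lcoef k) k hk hg hg3 hA
    apply hred (lcoef k * (1 + g) ^ (k - 1))
    · have := hsum k (k - 1) (by omega) le_rfl
      linarith
    · have hpos : 0 ≤ (1 + g) * (1 + lcoef k * (1 + g) ^ (k - 1)) := by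
        have : 0 ≤ lcoef k := by linarith [hl0.1]
        positivity
      calc (1 + g) * (g * (1 + lcoef k * (1 + g) ^ (k - 1)))
          = g * ((1 + g) * (1 + lcoef k * (1 + g) ^ (k - 1))) := by ring
        _ ≤ q ^ k * ((1 + g) * (1 + lcoef k * (1 + g) ^ (k - 1))) :=
            mul_le_mul_of_nonneg_right hgk hpos
        _ ≤ q ^ k * ((1 - g) * (2 * (1 + 2 * g) ^ k - g)) := mul_le_mul_of_nonneg_left hs hθ0
        _ = _ := by ring
  · have hs := scalar_B g (lcoef k) k hk hg hB hl0.1 hl0.2.1 hl0.2.2 hl4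
    have hc := conv_bound q (Real.sqrt (q ^ k)) hq0 hq1 k hk (Real.sqrt_nonneg _)
      (Real.sq_sqrt hθ0)
    have hr2 := Real.sq_sqrt hθ0
    generalize Real.sqrt (q ^ k) = r at *
    have hl1 := hl0.1
    have hFj : ∀ j, j ≤ k - 1 → F j ≤ (q ^ j + (g + g * lcoef k * (1 + g) ^ (k - 2))) * N := by
      intro j hj
      have h1 := hconv j
      have h2 := hsum j (k - 2) (by omega) (by omega)
      have h3 := mul_le_mul_of_nonneg_left h2 hg
      have h4 : 0 ≤ g * q ^ j * N := by positivity
      linarith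
    apply hred (1 / 2 + lcoef k * r + lcoef k * (g + g * lcoef k * (1 + g) ^ (k - 2)))
    · calc _ ≤ ∑ m ∈ Finset.range k, (acoef m * q ^ (k - 1 - m) * N +
            acoef m * ((g + g * lcoef k * (1 + g) ^ (k - 2)) * N)) := by
            apply Finset.sum_le_sum
            intro m hm
            have := mul_le_mul_of_nonneg_left (hFj (k - 1 - m) (by omega)) (acoef_nonneg m)
            linarith
        _ = (∑ m ∈ Finset.range k, acoef m * q ^ (k - 1 - m)) * N
            + lcoef k * ((g + g * lcoef k * (1 + g) ^ (k - 2)) * N) := by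
            rw [Finset.sum_add_distrib, Finset.sum_mul, lcoef, Finset.sum_mul]
        _ ≤ _ := by
            have := mul_le_mul_of_nonneg_right hc hN
            linarith
    · have hZ0 : 0 ≤ (1 + g) ^ (k - 2) := by positivity
      generalize (1 + g) ^ (k - 2) = Z at *
      generalize lcoef k = l at *
      generalize (1 + 2 * g) ^ k = W at *
      generalize q ^ k = θ at *
      have hl : 0 ≤ l := by linarith
      have hamgm : g * (l * r) ≤ g * (l ^ 2 * g) + θ / 4 := by
        rw [← hr2]; nlinarith [sq_nonneg (g * l - r / 2)]
      have hin : g * (1 + (1 / 2 + l * r + l * (g + g * l * Z)))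
          ≤ θ * (7 / 4 + l ^ 2 * g + l * g + l ^ 2 * g * Z) := by
        have h0 : 0 ≤ 3 / 2 + l ^ 2 * g + l * g + l ^ 2 * g * Z := by positivity
        have := mul_le_mul_of_nonneg_right hgk h0
        linarith
      have h1 := mul_le_mul_of_nonneg_left hin (by linarith : 0 ≤ 1 + g)
      have h2 := mul_le_mul_of_nonneg_left hs hθ0
      linarith

/-- abstract form of Theorem 4.3 of the paper: convergence of the
inexact block iteration. With a complete orthogonal family `(u i)` with `a(uᵢ,uᵢ) = Eᵢ`,
`0 < E₀ ≤ E₁ ≤ ⋯` (0-based indexing, so `q = E₀/E_K` is the paper's `E^1/E^{K+1}`),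
`B uᵢ = (E₀/Eᵢ) uᵢ` (so `|||B||| ≤ 1`), a linear preconditioner `P̂` with
`|||v - P̂ v||| ≤ γ |||v|||`, and a starting vector `v⁽⁰⁾` with `a(v⁽⁰⁾,u₀) = E₀` and
`a(v⁽⁰⁾,uᵢ) = 0` for `1 ≤ i < K`, the inexact iterates
`ṽ⁽ᵏ⁾ = ṽ⁽ᵏ⁻¹⁾ + P̂(B ṽ⁽ᵏ⁻¹⁾ - ṽ⁽ᵏ⁻¹⁾)` satisfy
`|||ṽ⁽ᵏ⁾ - u₀||| ≤ q^k |||v⁽⁰⁾ - u₀||| + 2γ (Σ_{ν<k} (1+2γ)^ν) |||v⁽⁰⁾|||`; in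
particular, if `γ ≤ q^k = tol`, then
`|||ṽ⁽ᵏ⁾ - u₀||| ≤ tol (|||v⁽⁰⁾ - u₀||| + 2 (1+2γ)^k |||v⁽⁰⁾|||)`. -/
theorem statement12 {H : Type*} [NormedAddCommGroup H] [InnerProductSpace ℝ H]
    [CompleteSpace H]
    (u : ℕ → H) (E : ℕ → ℝ) (hpos : 0 < E 0) (hmono : Monotone E)
    (hnorm : ∀ i, ⟪u i, u i⟫ = E i)
    (horth : ∀ i j, i ≠ j → ⟪u i, u j⟫ = 0)
    (hcomplete : (Submodule.span ℝ (Set.range u)).topologicalClosure = ⊤)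
    (B : H →L[ℝ] H) (hB : ∀ i, B (u i) = (E 0 / E i) • u i)
    (K : ℕ) (hK : 1 ≤ K)
    (Phat : H →ₗ[ℝ] H) (γ : ℝ) (hP : ∀ v : H, ‖v - Phat v‖ ≤ γ * ‖v‖)
    (v0 : H) (hv1 : ⟪v0, u 0⟫ = E 0)
    (hv2 : ∀ i, 1 ≤ i → i < K → ⟪v0, u i⟫ = 0)
    (tv : ℕ → H) (h0 : tv 0 = v0)
    (hrec : ∀ k : ℕ, tv (k + 1) = tv k + Phat (B (tv k) - tv k)) :
    ∀ k : ℕ,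
      ‖tv k - u 0‖ ≤ (E 0 / E K) ^ k * ‖v0 - u 0‖ +
          2 * γ * (∑ ν ∈ Finset.range k, (1 + 2 * γ) ^ ν) * ‖v0‖ ∧
        (γ ≤ (E 0 / E K) ^ k →
          ‖tv k - u 0‖ ≤
            (E 0 / E K) ^ k * (‖v0 - u 0‖ + 2 * (1 + 2 * γ) ^ k * ‖v0‖)) := by
  have hE : ∀ i, 0 < E i := fun i => lt_of_lt_of_le hpos (hmono (Nat.zero_le i))
  have hne : ∀ i, u i ≠ 0 := by
    intro i h
    have := hnorm i
    rw [h, inner_zero_left] at this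
    linarith [hE i]
  have hdiag := diag_bound u hne horth hcomplete
  have hγ : 0 ≤ γ := by
    have h := (norm_nonneg _).trans (hP (u 0))
    exact nonneg_of_mul_nonneg_left h (norm_pos_iff.mpr (hne 0))
  -- eigenvalues
  have hlam : ∀ i, 0 < E 0 / E i ∧ E 0 / E i ≤ 1 := fun i =>
    ⟨div_pos hpos (hE i), (div_le_one (hE i)).mpr (hmono (Nat.zero_le i))⟩
  have hBpow : ∀ m i, (B ^ m) (u i) = (E 0 / E i) ^ m • u i := by
    intro m i
    induction m with
    | zero => simp
    | succ m ih =>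
      rw [pow_succ', mul_apply_eq_comp, ih, map_smul, hB, smul_smul, pow_succ]
  have hBAnorm : ∀ m x, ‖(B ^ m) (x - B x)‖ ≤ acoef m * ‖x‖ := by
    intro m x
    have := hdiag (B ^ m * (1 - B)) (fun i => (E 0 / E i) ^ m * (1 - E 0 / E i)) (by
      intro i
      simp only [mul_apply_eq_comp, sub_apply,
        one_apply_eq_self, hB, map_sub, map_smul, hBpow, smul_smul]
      rw [← sub_smul]; congr 1; ring) x (acoef m) (acoef_nonneg m) (by
      intro i _
      rw [abs_of_nonneg (mul_nonneg (pow_nonneg (hlam i).1.le _) (by linarith [(hlam i).2]))]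
      exact pow_mul_le_acoef _ (hlam i).1 (hlam i).2 m)
    simpa using this
  have hBm : ∀ m x, ‖(B ^ m) x‖ ≤ ‖x‖ := by
    intro m x
    have := hdiag (B ^ m) _ (hBpow m) x 1 zero_le_one (by
      intro i _
      rw [abs_of_nonneg (pow_nonneg (hlam i).1.le _)]
      exact pow_le_one₀ (hlam i).1.le (hlam i).2)
    simpa using this
  have hB1 : ∀ x, ‖B x‖ ≤ ‖x‖ := fun x => by simpa using hBm 1 x
  have hA1 : ∀ x, ‖x - B x‖ ≤ ‖x‖ := fun x => by
    have := hBAnorm 0 x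
    simpa [acoef] using this
  have hBu0 : B (u 0) = u 0 := by rw [hB, div_self hpos.ne', one_smul]
  obtain ⟨q, hq⟩ : ∃ q, q = E 0 / E K := ⟨_, rfl⟩
  rw [← hq]
  have hq0 : 0 < q := hq ▸ (hlam K).1
  have hq1 : q ≤ 1 := hq ▸ (hlam K).2
  -- initial error
  obtain ⟨e, he⟩ : ∃ e : ℕ → H, ∀ k, e k = tv k - u 0 := ⟨_, fun _ => rfl⟩
  have he0 : e 0 = v0 - u 0 := by rw [he, h0]
  have hestep : ∀ k, e (k + 1) = e k - Phat (e k - B (e k)) := by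
    intro k
    have h1 : e k - B (e k) = -(B (tv k) - tv k) := by
      rw [he, map_sub, hBu0]; abel
    rw [h1, map_neg, he, hrec, he]; abel
  have heorth : ∀ i, i < K → ⟪e 0, u i⟫ = 0 := by
    intro i hi
    rw [he0, inner_sub_left]
    rcases Nat.eq_zero_or_pos i with rfl | hi0
    · rw [hv1, hnorm]; ring
    · rw [hv2 i hi0 hi, horth 0 i (by omega)]; ring
  have hN : ‖e 0‖ ≤ ‖v0‖ := by
    have h1 : v0 = e 0 + u 0 := by rw [he0]; abel
    have h2 := norm_add_sq_eq_norm_sq_add_norm_sq_of_inner_eq_zero (e 0) (u 0) (heorth 0 (by omega))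
    rw [← h1] at h2
    nlinarith [norm_nonneg (e 0), norm_nonneg v0, mul_self_nonneg ‖u 0‖]
  have hBq : ∀ k, ‖(B ^ k) (e 0)‖ ≤ q ^ k * ‖e 0‖ := by
    intro k
    apply hdiag (B ^ k) _ (hBpow k) (e 0) (q ^ k) (by positivity)
    intro i hi
    have hKi : K ≤ i := by
      by_contra h
      exact hi (heorth i (by omega))
    rw [abs_of_nonneg (pow_nonneg (hlam i).1.le _)]
    apply pow_le_pow_left₀ (hlam i).1.le
    rw [hq]
    exact div_le_div_of_nonneg_left hpos.le (hE K) (hmono hKi)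
  -- trivial estimates
  have hen : ∀ k, ‖e k‖ ≤ (1 + γ) ^ k * ‖e 0‖ := by
    intro k
    induction k with
    | zero => simp
    | succ k ih =>
      have h1 : e (k + 1) = B (e k) + ((e k - B (e k)) - Phat (e k - B (e k))) := by
        rw [hestep]; abel
      have h2 := norm_add_le (B (e k)) ((e k - B (e k)) - Phat (e k - B (e k)))
      rw [← h1] at h2
      have h3 := hP (e k - B (e k))
      have h4 := mul_le_mul_of_nonneg_left (hA1 (e k)) hγ
      have h5 := mul_le_mul_of_nonneg_left ih (by linarith : 0 ≤ 1 + γ)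
      calc ‖e (k + 1)‖ ≤ (1 + γ) * ‖e k‖ := by linarith [hB1 (e k)]
        _ ≤ (1 + γ) * ((1 + γ) ^ k * ‖e 0‖) := h5
        _ = _ := by ring
  have hd : ∀ k, ‖e k - (B ^ k) (e 0)‖ ≤ ((1 + γ) ^ k - 1) * ‖e 0‖ := by
    intro k
    induction k with
    | zero => simp
    | succ k ih =>
      have h1 : e (k + 1) - (B ^ (k + 1)) (e 0) = B (e k - (B ^ k) (e 0))
          + ((e k - B (e k)) - Phat (e k - B (e k))) := by
        rw [hestep, map_sub B, pow_succ', mul_apply_eq_comp]; abel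
      rw [h1]
      have h2 := norm_add_le (B (e k - (B ^ k) (e 0))) ((e k - B (e k)) - Phat (e k - B (e k)))
      have h3 := hP (e k - B (e k))
      have h4 := mul_le_mul_of_nonneg_left ((hA1 (e k)).trans (hen k)) hγ
      have h5 := (hB1 (e k - (B ^ k) (e 0))).trans ih
      refine h2.trans ?_
      rw [pow_succ]
      linarith
  have hek : ∀ k, ‖e k‖ ≤ q ^ k * ‖e 0‖ + ((1 + γ) ^ k - 1) * ‖e 0‖ := by
    intro k
    have h1 : e k = (B ^ k) (e 0) + (e k - (B ^ k) (e 0)) := by abel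
    have h2 := norm_add_le ((B ^ k) (e 0)) (e k - (B ^ k) (e 0))
    rw [← h1] at h2
    linarith [hd k, hBq k]
  intro k
  rw [← he0, ← he]
  constructor
  · have hg : 2 * γ * (∑ ν ∈ Finset.range k, (1 + 2 * γ) ^ ν) = (1 + 2 * γ) ^ k - 1 := by
      have := mul_geom_sum (1 + 2 * γ) k
      rw [← this]; ring
    rw [hg]
    have h1 : (1 + γ) ^ k ≤ (1 + 2 * γ) ^ k := pow_le_pow_left₀ (by linarith) (by linarith) k
    have h2 : 1 ≤ (1 + γ) ^ k := one_le_pow₀ (by linarith)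
    have h3 : ((1 + γ) ^ k - 1) * ‖e 0‖ ≤ ((1 + 2 * γ) ^ k - 1) * ‖v0‖ :=
      mul_le_mul (by linarith) hN (norm_nonneg _) (by linarith)
    linarith [hek k]
  · intro hγk
    have hW0 : 0 ≤ (1 + 2 * γ) ^ k := by positivity
    have hqk : 0 ≤ q ^ k := by positivity
    suffices hs : ‖e k‖ ≤ q ^ k * (1 + 2 * (1 + 2 * γ) ^ k) * ‖e 0‖ by
      have h1 : q ^ k * (2 * (1 + 2 * γ) ^ k) * ‖e 0‖ ≤ q ^ k * (2 * (1 + 2 * γ) ^ k) * ‖v0‖ :=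
        mul_le_mul_of_nonneg_left hN (by positivity)
      linarith
    by_cases hT : k ≤ 2 ∨ 8 / 25 ≤ γ
    · have h1 := scalar_T γ k hγ hT
      have h2 : 2 * γ * (1 + 2 * γ) ^ k ≤ 2 * q ^ k * (1 + 2 * γ) ^ k :=
        mul_le_mul_of_nonneg_right (by linarith) hW0
      have h3 := mul_le_mul_of_nonneg_right (h1.trans h2) (norm_nonneg (e 0))
      linarith [hek k]
    · push Not at hT
      obtain ⟨hk2, hγ3⟩ := hT
      let Q : H →L[ℝ] H := LinearMap.mkContinuous (LinearMap.id - Phat) γ (by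
        intro x; simpa using hP x)
      have hQ : ∀ x, Q x = x - Phat x := fun x => by simp [Q]
      have hQn : ‖Q‖ < 1 :=
        lt_of_le_of_lt (LinearMap.mkContinuous_norm_le _ hγ _) (by linarith)
      have hQb : ∀ x, ‖Q x‖ ≤ γ * ‖x‖ := fun x => by rw [hQ]; exact hP x
      obtain ⟨f0, hf0⟩ : ∃ f0, f0 - Q f0 = e 0 := by
        let U := Units.oneSub Q hQn
        refine ⟨(U⁻¹ : (H →L[ℝ] H)ˣ).val (e 0), ?_⟩
        have h1 : U.val * (U⁻¹ : (H →L[ℝ] H)ˣ).val = 1 := U.mul_inv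
        have h2 := congrArg (fun T : H →L[ℝ] H => T (e 0)) h1
        simpa [U, Units.val_oneSub] using h2
      let f : ℕ → H := fun n => Nat.rec f0 (fun _ x => B x + (Q x - B (Q x))) n
      have hfz : f 0 = f0 := rfl
      have hfs : ∀ j, f (j + 1) = B (f j) + (Q (f j) - B (Q (f j))) := fun j => rfl
      have hef : ∀ j, e j = Phat (f j) := by
        intro j
        induction j with
        | zero => rw [hfz, ← hf0, hQ]; abel
        | succ j ih =>
          rw [hestep, ih, hfs, ← map_sub]
          congr 1
          rw [hQ, map_sub]; abel
      have hfexp : ∀ j, f j = (B ^ j) f0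
          + ∑ m ∈ Finset.range j, (B ^ m) (Q (f (j - 1 - m)) - B (Q (f (j - 1 - m)))) := by
        intro j
        induction j with
        | zero => simp [hfz]
        | succ j ih =>
          rw [hfs, Finset.sum_range_succ']
          have h1 : B (f j) = (B ^ (j + 1)) f0 + ∑ m ∈ Finset.range j,
              (B ^ (m + 1)) (Q (f (j + 1 - 1 - (m + 1))) - B (Q (f (j + 1 - 1 - (m + 1))))) := by
            conv_lhs => rw [ih]
            rw [map_add, map_sum, pow_succ', mul_apply_eq_comp]
            congr 1
            apply Finset.sum_congr rfl
            intro m _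
            have : j + 1 - 1 - (m + 1) = j - 1 - m := by omega
            rw [this, pow_succ', mul_apply_eq_comp]
          rw [h1]
          simp [add_assoc]
      have hf0n : (1 - γ) * ‖f0‖ ≤ ‖e 0‖ := by
        have h1 := norm_sub_norm_le f0 (Q f0)
        rw [hf0] at h1
        linarith [hQb f0]
      have hseq := seq_bound γ q ‖e 0‖ hγ hγ3.le hq0.le hq1 (norm_nonneg _)
        (fun j => (1 - γ) * ‖f j‖) (by simpa [hfz] using hf0n)
        (by
          intro j
          have h1 := norm_add_le (B (f j)) (Q (f j) - B (Q (f j)))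
          rw [← hfs] at h1
          have h2 : ‖f (j + 1)‖ ≤ (1 + γ) * ‖f j‖ := by
            linarith [hB1 (f j), (hA1 (Q (f j))).trans (hQb (f j))]
          have h3 := mul_le_mul_of_nonneg_left h2 (by linarith : 0 ≤ 1 - γ)
          change (1 - γ) * ‖f (j + 1)‖ ≤ (1 + γ) * ((1 - γ) * ‖f j‖)
          linarith)
        (by
          intro j
          have hb0 : ‖(B ^ j) f0‖ ≤ q ^ j * ‖e 0‖ + γ * ‖f0‖ := by
            have h1 : f0 = e 0 + Q f0 := by rw [← hf0]; abel
            have h2 : (B ^ j) f0 = (B ^ j) (e 0) + (B ^ j) (Q f0) := by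
              rw [← map_add, ← h1]
            rw [h2]
            have h3 := norm_add_le ((B ^ j) (e 0)) ((B ^ j) (Q f0))
            linarith [hBq j, (hBm j (Q f0)).trans (hQb f0)]
          have hs : ‖∑ m ∈ Finset.range j, (B ^ m) (Q (f (j - 1 - m)) - B (Q (f (j - 1 - m))))‖
              ≤ γ * ∑ m ∈ Finset.range j, acoef m * ‖f (j - 1 - m)‖ := by
            refine (norm_sum_le _ _).trans ?_
            rw [Finset.mul_sum]
            apply Finset.sum_le_sum
            intro m _
            have h1 := hBAnorm m (Q (f (j - 1 - m)))
            have h2 := mul_le_mul_of_nonneg_left (hQb (f (j - 1 - m))) (acoef_nonneg m)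
            linarith
          have h3 : ‖f j‖ ≤ q ^ j * ‖e 0‖ + γ * ‖f0‖
              + γ * ∑ m ∈ Finset.range j, acoef m * ‖f (j - 1 - m)‖ := by
            conv_lhs => rw [hfexp j]
            exact (norm_add_le _ _).trans (add_le_add hb0 hs)
          have h4 := mul_le_mul_of_nonneg_left h3 (by linarith : 0 ≤ 1 - γ)
          have h5 := mul_le_mul_of_nonneg_left hf0n hγ
          have h6 : ∑ m ∈ Finset.range j, acoef m * ((1 - γ) * ‖f (j - 1 - m)‖)
              = (1 - γ) * ∑ m ∈ Finset.range j, acoef m * ‖f (j - 1 - m)‖ := by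
            rw [Finset.mul_sum]
            apply Finset.sum_congr rfl
            intro m _; ring
          simp only [h6]
          linarith)
        k (by omega) hγk
      have hekf : ‖e k‖ ≤ (1 + γ) * ‖f k‖ := by
        have h1 : e k = f k - Q (f k) := by rw [hef, hQ]; abel
        rw [h1]
        have h2 := norm_sub_le (f k) (Q (f k))
        linarith [hQb (f k)]
      have h7 := mul_le_mul_of_nonneg_left hekf (by linarith : 0 ≤ 1 - γ)
      have h8 : (1 - γ) * ‖e k‖ ≤ (1 - γ) * (q ^ k * (1 + 2 * (1 + 2 * γ) ^ k) * ‖e 0‖) := by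
        linarith
      exact le_of_mul_le_mul_left h8 (by linarith)
end
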